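/- Let μ be an ergodic process on Σ = 𝒜^{ℤ_{≥0}^d} and for each n set k = k(n) = ⌊(log n^d)^{1/d}⌋. Then the empirical per-site k-block entropy h_x^{k,n} := H(𝜇̃_x^{k(n),n})/k(n)^d converges to the entropy rate h(μ) as n → ∞, for μ-almost every x. -/

import Mathlib

open MeasureTheory Filter Topology

namespace SRU1408

/-- A site of the lattice `ℤ_{≥0}^d`. -/
abbrev Site (d : ℕ) := Fin d → ℕ

/-- An infinite array over the alphabet `Fin A`, i.e. an element of `Σ = 𝒜^{ℤ_{≥0}^d}`. -/
abbrev Config (A d : ℕ) := Site d → Fin A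

/-- A cubical `k`-word, i.e. an element of `Σ^k = 𝒜^{Λ_k}`. -/
abbrev Word (A d k : ℕ) := (Fin d → Fin k) → Fin A

variable {A d : ℕ}

/-- The pattern of `x` on the cube `Λ_k + c`, as a `k`-word. -/
def wordAt (x : Config A d) (k : ℕ) (c : Site d) : Word A d k :=
  fun i => x fun j => c j + (i j : ℕ)

/-- The lattice shift `σ_r`. -/
def shift (r : Site d) (x : Config A d) : Config A d := fun i => x (i + r)

/-- Stationarity: invariance under all shifts. -/
def Stationary (μ : Measure (Config A d)) : Prop := ∀ r : Site d, μ.map (shift r) = μ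

/-- Ergodicity: stationary, and every measurable set invariant under all shifts is trivial. -/
def ErgodicShift (μ : Measure (Config A d)) : Prop :=
  Stationary μ ∧ ∀ E : Set (Config A d), MeasurableSet E →
    (∀ r : Site d, shift r ⁻¹' E = E) → μ E = 0 ∨ μ E = 1

/-- The `k`-word marginal distribution `μ^k`, as a probability vector on `Σ^k`. -/
noncomputable def wordDist (μ : Measure (Config A d)) (k : ℕ) : Word A d k → ℝ :=
  fun w => (μ {x | wordAt x k 0 = w}).toReal

/-- Base-`A` entropy of a probability vector. -/
noncomputable def entH (A : ℕ) {W : Type*} [Fintype W] (p : W → ℝ) : ℝ :=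
  -∑ w, p w * Real.logb A (p w)

/-- `μ` has entropy rate `h` (base-`A` logarithms): `H(μ^n)/n^d → h`. -/
def HasEntropyRate (μ : Measure (Config A d)) (h : ℝ) : Prop :=
  Tendsto (fun n : ℕ => entH A (wordDist μ n) / (n : ℝ) ^ d) atTop (𝓝 h)

/-- The empirical non-overlapping `k`-block distribution `𝜇̃_x^{k,n}` of `x` over `Λ_n`. -/
noncomputable def empDist (x : Config A d) (k n : ℕ) : Word A d k → ℝ := fun w =>
  (Set.ncard {r : Fin d → Fin (n / k) | wordAt x k (fun j => k * (r j : ℕ)) = w} : ℝ) /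
    ((n / k : ℕ) : ℝ) ^ d

/-- The empirical probability `𝜇̃_x^{k,n}(S)` of a set `S` of `k`-words. -/
noncomputable def empProb (x : Config A d) (k n : ℕ) (S : Set (Word A d k)) : ℝ :=
  (Set.ncard {r : Fin d → Fin (n / k) | wordAt x k (fun j => k * (r j : ℕ)) ∈ S} : ℝ) /
    ((n / k : ℕ) : ℝ) ^ d

/-- `k(n) = ⌊(log_A n^d)^{1/d}⌋`. -/
noncomputable def kOf (A d n : ℕ) : ℕ :=
  ⌊(Real.logb A ((n : ℝ) ^ d)) ^ (1 / (d : ℝ))⌋₊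

section Entropy

variable {W : Type*} [Fintype W]

/-- Gibbs' inequality: entropy is at most the cross entropy against a subprobability vector. -/
lemma entH_le_cross_entropy (hA : 2 ≤ A) (p q : W → ℝ) (hp : ∀ w, 0 ≤ p w)
    (hp1 : ∑ w, p w = 1) (hq : ∀ w, 0 < q w) (hq1 : ∑ w, q w ≤ 1) :
    entH A p ≤ ∑ w, p w * (-Real.logb A (q w)) := by
  have hlog : 0 < Real.log A := Real.log_pos (by exact_mod_cast hA)
  have key : ∀ w, p w * (Real.logb A (q w)) - p w * Real.logb A (p w) ≤
      (q w - p w) / Real.log A := by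
    intro w
    rcases (hp w).eq_or_lt with h0 | h0
    · rw [← h0]
      have := (hq w).le
      simp only [zero_mul, sub_zero]
      positivity
    · rw [Real.logb, Real.logb, ← mul_sub, ← sub_div, ← Real.log_div (hq w).ne' h0.ne',
        ← mul_div_assoc]
      gcongr
      have := Real.log_le_sub_one_of_pos (div_pos (hq w) h0)
      calc p w * Real.log (q w / p w) ≤ p w * (q w / p w - 1) := by gcongr
        _ = q w - p w := by field_simp
  have hsum := Finset.sum_le_sum fun w (_ : w ∈ Finset.univ) => key w
  rw [Finset.sum_sub_distrib, ← Finset.sum_div, Finset.sum_sub_distrib, hp1] at hsum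
  have : (∑ w, q w - 1) / Real.log A ≤ 0 :=
    div_nonpos_of_nonpos_of_nonneg (by linarith) hlog.le
  simp only [entH, mul_neg, Finset.sum_neg_distrib]
  linarith

lemma entH_nonneg (hA : 2 ≤ A) (p : W → ℝ) (hp : ∀ w, 0 ≤ p w) (hp1 : ∀ w, p w ≤ 1) :
    0 ≤ entH A p := by
  rw [entH, ← Finset.sum_neg_distrib]
  refine Finset.sum_nonneg fun w _ => ?_
  have := Real.logb_nonpos (b := A) (by exact_mod_cast hA) (hp w) (hp1 w)
  nlinarith [hp w]

lemma sum_indicator_const (S : Set W) (K : ℝ) :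
    ∑ w, S.indicator (fun _ => K) w = S.ncard * K := by
  classical
  simp only [Set.indicator_apply]
  rw [← Finset.sum_filter, Finset.sum_const, Set.ncard_eq_toFinset_card', nsmul_eq_mul]
  congr 3
  ext
  simp

/-- A probability vector mostly carried by a small set has small entropy. -/
lemma entH_le_of_concentrated (hA : 2 ≤ A) (p : W → ℝ) (hp : ∀ w, 0 ≤ p w)
    (hp1 : ∑ w, p w = 1) (S : Set W) {K δ : ℝ} (hK : 1 ≤ K) (hS : (S.ncard : ℝ) ≤ K)
    {B : Set W} (hB : Bᶜ ⊆ S) (hδ : ∑ w, B.indicator p w ≤ δ) :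
    entH A p ≤ Real.logb A K + 1 + δ * Real.logb A (Fintype.card W) := by
  classical
  have hA1 : (1 : ℝ) < A := by exact_mod_cast hA
  have hW : 0 < Fintype.card W := by
    rw [Fintype.card_pos_iff]
    by_contra hne
    rw [not_nonempty_iff] at hne
    simp at hp1
  have hC : (1 : ℝ) ≤ Fintype.card W := by exact_mod_cast hW
  set C : ℝ := (Fintype.card W : ℝ) with hCdef
  let q : W → ℝ := fun w => S.indicator (fun _ => 1 / (2 * K)) w + 1 / (2 * C)
  have hq : ∀ w, 0 < q w := fun w =>
    add_pos_of_nonneg_of_pos (Set.indicator_nonneg (fun _ _ => by positivity) _) (by positivity)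
  have hq1 : ∑ w, q w ≤ 1 := by
    rw [Finset.sum_add_distrib, sum_indicator_const, Finset.sum_const, nsmul_eq_mul, Finset.card_univ, ← hCdef]
    have h2 : (S.ncard : ℝ) * (1 / (2 * K)) ≤ K * (1 / (2 * K)) := by gcongr
    have h3 : K * (1 / (2 * K)) = 1 / 2 := by field_simp
    have h4 : C * (1 / (2 * C)) = 1 / 2 := by field_simp
    linarith
  refine (entH_le_cross_entropy hA p q hp hp1 hq hq1).trans ?_
  have hl2 : Real.logb A 2 ≤ 1 := by
    rw [Real.logb_le_iff_le_rpow hA1 (by norm_num), Real.rpow_one]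
    exact_mod_cast hA
  have hlK : 0 ≤ Real.logb A K := Real.logb_nonneg hA1 hK
  have hlC : 0 ≤ Real.logb A C := Real.logb_nonneg hA1 hC
  have bound : ∀ w, p w * (-Real.logb A (q w)) ≤
      p w * (Real.logb A K + 1) + B.indicator p w * Real.logb A C := by
    intro w
    by_cases hw : w ∈ B
    · rw [Set.indicator_of_mem hw, ← mul_add]
      refine mul_le_mul_of_nonneg_left ?_ (hp w)
      have : Real.logb A (1 / (2 * C)) ≤ Real.logb A (q w) :=
        Real.logb_le_logb_of_le hA1 (by positivity)
          (le_add_of_nonneg_left (Set.indicator_nonneg (fun _ _ => by positivity) _))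
      rw [one_div, Real.logb_inv, Real.logb_mul (by norm_num) (by positivity)] at this
      linarith
    · rw [Set.indicator_of_notMem hw, zero_mul, add_zero]
      refine mul_le_mul_of_nonneg_left ?_ (hp w)
      have hwS : w ∈ S := hB hw
      have : Real.logb A (1 / (2 * K)) ≤ Real.logb A (q w) := by
        refine Real.logb_le_logb_of_le hA1 (by positivity) ?_
        simp only [q, Set.indicator_of_mem hwS]
        exact le_add_of_nonneg_right (by positivity)
      rw [one_div, Real.logb_inv, Real.logb_mul (by norm_num) (by positivity)] at this
      linarith
  calc _ ≤ ∑ w, (p w * (Real.logb A K + 1) + B.indicator p w * Real.logb A C) :=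
        Finset.sum_le_sum fun w _ => bound w
    _ = Real.logb A K + 1 + (∑ w, B.indicator p w) * Real.logb A C := by
        rw [Finset.sum_add_distrib, ← Finset.sum_mul, ← Finset.sum_mul, hp1, one_mul]
    _ ≤ _ := by gcongr

end Entropy

/-- Summing over all colourings a product of functions of restrictions to disjoint pieces. -/
lemma sum_prod_restrict {ι S α : Type*} [Fintype ι] [DecidableEq ι] {V : ι → Type*}
    [∀ i, Fintype (V i)] [∀ i, DecidableEq (V i)] [Fintype S] [DecidableEq S] [Fintype α]
    (e : (i : ι) → V i → S)
    (he : Function.Injective fun p : (Σ i, V i) => e p.1 p.2)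
    (F : (i : ι) → (V i → α) → ℝ) :
    ∑ w : S → α, ∏ i, F i (fun v => w (e i v)) =
      (∏ i, ∑ v, F i v) * (Fintype.card α : ℝ) ^ (Fintype.card S - ∑ i, Fintype.card (V i)) := by
  classical
  let E : (Σ i, V i) → S := fun p => e p.1 p.2
  let Φ : (S → α) ≃ (((i : ι) → V i → α) × ({s // ¬ s ∈ Set.range E} → α)) :=
    (Equiv.piEquivPiSubtypeProd (fun s => s ∈ Set.range E) (fun _ => α)).trans
      (Equiv.prodCongr (((Equiv.ofInjective E he).symm.arrowCongr (Equiv.refl α)).trans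
        (Equiv.piCurry (fun _ _ => α))) (Equiv.refl _))
  have hΦ : ∀ w i v, (Φ w).1 i v = w (e i v) := by
    intro w i v
    rfl
  have hcard : Fintype.card {s // ¬ s ∈ Set.range E} =
      Fintype.card S - ∑ i, Fintype.card (V i) := by
    rw [Fintype.card_subtype_compl, ← Fintype.card_sigma]
    congr 1
    exact (Fintype.card_congr (Equiv.ofInjective E he)).symm
  calc ∑ w : S → α, ∏ i, F i (fun v => w (e i v))
      = ∑ z : ((i : ι) → V i → α) × ({s // ¬ s ∈ Set.range E} → α), ∏ i, F i (z.1 i) :=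
        Fintype.sum_equiv Φ _ _ fun _ => rfl
    _ = _ := by
        rw [Fintype.sum_prod_type]
        simp only [Finset.sum_const, Finset.card_univ, nsmul_eq_mul]
        rw [Fintype.card_fun, hcard, ← Finset.mul_sum, mul_comm, Nat.cast_pow,
          Finset.prod_univ_sum, Fintype.piFinset_univ]

/-- The cube `Λ_n + r`. -/
def cube (r : Site d) (n : ℕ) : Finset (Site d) :=
  Fintype.piFinset fun j => Finset.Ico (r j) (r j + n)

lemma mem_cube {r t : Site d} {n : ℕ} : t ∈ cube r n ↔ ∀ j, r j ≤ t j ∧ t j < r j + n := by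
  simp [cube]

lemma mem_cube_zero {t : Site d} {n : ℕ} : t ∈ cube 0 n ↔ ∀ j, t j < n := by
  simp [mem_cube]

lemma card_cube (r : Site d) (n : ℕ) : (cube r n).card = n ^ d := by
  simp [cube]

lemma self_mem_cube {r : Site d} {n : ℕ} (hn : 1 ≤ n) : r ∈ cube r n :=
  mem_cube.2 fun _ => ⟨le_rfl, by omega⟩

lemma cube_mono (r : Site d) {m n : ℕ} (h : m ≤ n) : cube r m ⊆ cube r n := fun _ ht =>
  mem_cube.2 fun j => ⟨(mem_cube.1 ht j).1, by have := (mem_cube.1 ht j).2; omega⟩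

/-- The corners `r` of cubes of side at most `m` that meet `Λ_n + s`. -/
def cornerBox (s : Site d) (n m : ℕ) : Finset (Site d) :=
  Fintype.piFinset fun j => Finset.Ico (s j + 1 - m) (s j + n)

lemma card_cornerBox_le (s : Site d) (n m : ℕ) : (cornerBox s n m).card ≤ (n + m) ^ d := by
  rw [cornerBox, Fintype.card_piFinset]
  calc _ ≤ ∏ _j : Fin d, (n + m) := Finset.prod_le_prod' fun j _ => by
        rw [Nat.card_Ico]; omega
    _ = _ := by simp

lemma mem_cornerBox_of_not_disjoint {r s : Site d} {n m : ℕ}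
    (h : ¬ Disjoint (cube r m) (cube s n)) : r ∈ cornerBox s n m := by
  rw [Finset.not_disjoint_iff] at h
  obtain ⟨t, h1, h2⟩ := h
  rw [mem_cube] at h1 h2
  simp only [cornerBox, Fintype.mem_piFinset, Finset.mem_Ico]
  intro j
  have := h1 j
  have := h2 j
  omega

/-- Vitali's covering lemma for a finite family of cubes given by their corners. -/
lemma exists_disjoint_cubes (n : Site d → ℕ) (T : Finset (Site d)) (hn : ∀ r ∈ T, 1 ≤ n r) :
    ∃ T' ⊆ T, (T' : Set (Site d)).PairwiseDisjoint (fun r => cube r (n r)) ∧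
      T.card ≤ 2 ^ d * ∑ r ∈ T', n r ^ d := by
  classical
  induction T using Finset.strongInduction with
  | H T ih =>
    rcases T.eq_empty_or_nonempty with rfl | hT
    · exact ⟨∅, by simp⟩
    obtain ⟨r₀, hr₀, hmax⟩ := T.exists_max_image n hT
    let T₁ := T.filter fun r => Disjoint (cube r (n r)) (cube r₀ (n r₀))
    have hr₀T₁ : r₀ ∉ T₁ := by
      intro h
      have := (Finset.mem_filter.1 h).2
      exact Finset.disjoint_left.1 this (self_mem_cube (hn _ hr₀)) (self_mem_cube (hn _ hr₀))
    have hsub : T₁ ⊆ T := Finset.filter_subset _ _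
    obtain ⟨T', hT', hdisj, hcard⟩ := ih T₁ (Finset.ssubset_iff_subset_ne.2
      ⟨hsub, fun h => hr₀T₁ (h ▸ hr₀)⟩) fun r hr => hn r (hsub hr)
    refine ⟨insert r₀ T', ?_, ?_, ?_⟩
    · exact Finset.insert_subset hr₀ (hT'.trans hsub)
    · rw [Finset.coe_insert]
      refine hdisj.insert fun r hr _ => ?_
      exact ((Finset.mem_filter.1 (hT' hr)).2).symm
    · rw [Finset.sum_insert fun h => hr₀T₁ (hT' h), mul_add]
      have hcover : T ⊆ cornerBox r₀ (n r₀) (n r₀) ∪ T₁ := by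
        intro r hr
        by_cases h : Disjoint (cube r (n r)) (cube r₀ (n r₀))
        · exact Finset.mem_union_right _ (Finset.mem_filter.2 ⟨hr, h⟩)
        · refine Finset.mem_union_left _ (mem_cornerBox_of_not_disjoint fun h' => h ?_)
          exact h'.mono_left (cube_mono _ (hmax r hr))
      calc T.card ≤ _ := Finset.card_le_card hcover
        _ ≤ _ := Finset.card_union_le _ _
        _ ≤ (n r₀ + n r₀) ^ d + 2 ^ d * ∑ r ∈ T', n r ^ d :=
            add_le_add (card_cornerBox_le _ _ _) hcard
        _ = _ := by rw [← two_mul, mul_pow]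

/-- `P` is a disjoint family of cubes `Λ_n + r`, `(r, n) ∈ P`, inside `Λ_N`, with sides in
`[m, M]` and `r ∈ G n`. -/
structure IsPacking (G : ℕ → Set (Site d)) (m M N : ℕ) (P : Finset (Site d × ℕ)) : Prop where
  scale : ∀ p ∈ P, m ≤ p.2 ∧ p.2 ≤ M
  subset : ∀ p ∈ P, cube p.1 p.2 ⊆ cube 0 N
  disj : (P : Set (Site d × ℕ)).PairwiseDisjoint fun p => cube p.1 p.2
  good : ∀ p ∈ P, p.1 ∈ G p.2

/-- The number of sites covered by a packing. -/
def packVol (P : Finset (Site d × ℕ)) : ℕ := ∑ p ∈ P, p.2 ^ d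

lemma IsPacking.packVol_le {G : ℕ → Set (Site d)} {m M N : ℕ} {P : Finset (Site d × ℕ)}
    (hP : IsPacking G m M N P) : packVol P ≤ N ^ d := by
  classical
  rw [← card_cube 0 N, packVol, ← Finset.sum_congr rfl fun p _ => card_cube p.1 p.2,
    ← Finset.card_biUnion fun x hx y hy hxy => hP.disj hx hy hxy]
  exact Finset.card_le_card (Finset.biUnion_subset.2 hP.subset)

open Classical in
/-- Adding cubes of a smaller scale to a packing. -/
lemma IsPacking.extend {G : ℕ → Set (Site d)} {m m' M M' N : ℕ} {P : Finset (Site d × ℕ)}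
    (hP : IsPacking G m' M' N P) (hm : 1 ≤ m) (hmm : m ≤ m') (bad : Finset (Site d))
    (hbad : ∀ r ∈ cube 0 N, r ∉ bad → ∃ n, m ≤ n ∧ n ≤ M ∧ r ∈ G n) :
    ∃ P', IsPacking G m (max M M') N P' ∧
      (N - M) ^ d + 2 ^ d * packVol P ≤
        bad.card + ∑ p ∈ P, (p.2 + M) ^ d + 2 ^ d * packVol P' := by
  let T := (cube 0 (N - M)).filter fun r => (∃ n, m ≤ n ∧ n ≤ M ∧ r ∈ G n) ∧
    ∀ p ∈ P, Disjoint (cube r M) (cube p.1 p.2)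
  have hex : ∀ r, ∃ n, r ∈ T → m ≤ n ∧ n ≤ M ∧ r ∈ G n := by
    intro r
    by_cases hr : r ∈ T
    · obtain ⟨n, hn⟩ := (Finset.mem_filter.1 hr).2.1
      exact ⟨n, fun _ => hn⟩
    · exact ⟨0, fun h => absurd h hr⟩
  choose n hn using hex
  obtain ⟨T', hT', hdisj, hcard⟩ := exists_disjoint_cubes n T fun r hr => hm.trans (hn r hr).1
  have hTP : ∀ r ∈ T, ∀ p ∈ P, Disjoint (cube r (n r)) (cube p.1 p.2) := fun r hr p hp =>
    ((Finset.mem_filter.1 hr).2.2 p hp).mono_left (cube_mono _ (hn r hr).2.1)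
  have hinj : Set.InjOn (fun r => (r, n r)) (T' : Set (Site d)) := fun a _ b _ h =>
    (Prod.ext_iff.1 h).1
  have hPT : Disjoint P (T'.image fun r => (r, n r)) := by
    rw [Finset.disjoint_right]
    intro p hp hpP
    obtain ⟨r, hr, rfl⟩ := Finset.mem_image.1 hp
    have h1 : r ∈ cube r (n r) := self_mem_cube (hm.trans (hn r (hT' hr)).1)
    exact Finset.disjoint_left.1 (hTP r (hT' hr) _ hpP) h1 h1
  refine ⟨P ∪ T'.image fun r => (r, n r), ⟨?_, ?_, ?_, ?_⟩, ?_⟩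
  · intro p hp
    rcases Finset.mem_union.1 hp with hp | hp
    · have := hP.scale p hp
      exact ⟨hmm.trans this.1, this.2.trans (le_max_right _ _)⟩
    · obtain ⟨r, hr, rfl⟩ := Finset.mem_image.1 hp
      have := hn r (hT' hr)
      exact ⟨this.1, this.2.1.trans (le_max_left _ _)⟩
  · intro p hp
    rcases Finset.mem_union.1 hp with hp | hp
    · exact hP.subset p hp
    · obtain ⟨r, hr, rfl⟩ := Finset.mem_image.1 hp
      have h1 := hn r (hT' hr)
      have h2 := mem_cube_zero.1 (Finset.mem_filter.1 (hT' hr)).1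
      intro t ht
      rw [mem_cube_zero]
      intro j
      have := h2 j
      have := (mem_cube.1 ht j).2
      simp only at this
      omega
  · rw [Finset.coe_union, Set.pairwiseDisjoint_union]
    refine ⟨hP.disj, ?_, ?_⟩
    · rintro p hp q hq hpq
      obtain ⟨r, hr, rfl⟩ := Finset.mem_image.1 (Finset.mem_coe.1 hp)
      obtain ⟨s, hs, rfl⟩ := Finset.mem_image.1 (Finset.mem_coe.1 hq)
      exact hdisj hr hs fun h => hpq (h ▸ rfl)
    · intro p hp q hq _
      obtain ⟨r, hr, rfl⟩ := Finset.mem_image.1 (Finset.mem_coe.1 hq)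
      exact (hTP r (hT' hr) p hp).symm
  · intro p hp
    rcases Finset.mem_union.1 hp with hp | hp
    · exact hP.good p hp
    · obtain ⟨r, hr, rfl⟩ := Finset.mem_image.1 hp
      exact (hn r (hT' hr)).2.2
  · have hvol : packVol (P ∪ T'.image fun r => (r, n r)) = packVol P + ∑ r ∈ T', n r ^ d := by
      rw [packVol, Finset.sum_union hPT, Finset.sum_image hinj, packVol]
    have hcover : cube 0 (N - M) ⊆
        (bad ∪ P.biUnion fun p => cornerBox p.1 p.2 M) ∪ T := by
      intro r hr
      by_cases h1 : ∃ n, m ≤ n ∧ n ≤ M ∧ r ∈ G n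
      · by_cases h2 : ∀ p ∈ P, Disjoint (cube r M) (cube p.1 p.2)
        · exact Finset.mem_union_right _ (Finset.mem_filter.2 ⟨hr, h1, h2⟩)
        · push Not at h2
          obtain ⟨p, hp, h2⟩ := h2
          exact Finset.mem_union_left _ (Finset.mem_union_right _
            (Finset.mem_biUnion.2 ⟨p, hp, mem_cornerBox_of_not_disjoint h2⟩))
      · exact Finset.mem_union_left _ (Finset.mem_union_left _
          (by_contra fun hb => h1 (hbad r (cube_mono _ (Nat.sub_le _ _) hr) hb)))
    have h1 := (Finset.card_le_card hcover).trans ((Finset.card_union_le _ _).trans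
      (add_le_add (Finset.card_union_le _ _) le_rfl))
    have h2 : (P.biUnion fun p => cornerBox p.1 p.2 M).card ≤ ∑ p ∈ P, (p.2 + M) ^ d :=
      Finset.card_biUnion_le.trans (Finset.sum_le_sum fun p _ => card_cornerBox_le _ _ _)
    rw [card_cube] at h1
    rw [hvol, mul_add]
    omega

lemma measurable_shift (r : Site d) : Measurable (shift r : Config A d → Config A d) :=
  measurable_pi_lambda _ fun i => measurable_pi_apply (i + r)

lemma shift_shift (r s : Site d) (x : Config A d) : shift r (shift s x) = shift (r + s) x := by
  funext i
  simp [shift, add_assoc]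

lemma Stationary.measurePreserving {μ : Measure (Config A d)} (hμ : Stationary μ) (r : Site d) :
    MeasurePreserving (shift r) μ μ := ⟨measurable_shift r, hμ r⟩

/-- A measurable set mapped into itself by all shifts is trivial. -/
lemma ErgodicShift.measure_eq_zero_or_one {μ : Measure (Config A d)} [IsProbabilityMeasure μ]
    (hμ : ErgodicShift μ) {E : Set (Config A d)} (hE : MeasurableSet E)
    (h : ∀ r : Site d, E ⊆ shift r ⁻¹' E) : μ E = 0 ∨ μ E = 1 := by
  let F : Set (Config A d) := ⋃ r : Site d, shift r ⁻¹' E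
  have hF : MeasurableSet F := MeasurableSet.iUnion fun r => measurable_shift r hE
  have hinv : ∀ s : Site d, shift s ⁻¹' F = F := by
    intro s
    ext x
    simp only [F, Set.mem_preimage, Set.mem_iUnion, shift_shift]
    constructor
    · rintro ⟨r, hr⟩
      exact ⟨r + s, hr⟩
    · rintro ⟨r, hr⟩
      refine ⟨r, ?_⟩
      have := h s hr
      rwa [Set.mem_preimage, shift_shift, add_comm] at this
  have hEr : ∀ r : Site d, μ (shift r ⁻¹' E \ E) = 0 := fun r => by
    rw [measure_sdiff (h r) hE.nullMeasurableSet (measure_ne_top _ _),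
      (hμ.1.measurePreserving r).measure_preimage hE.nullMeasurableSet, tsub_self]
  have hFE : μ (F \ E) = 0 := by
    rw [Set.iUnion_sdiff]
    exact measure_iUnion_null hEr
  have hEF : μ E = μ F :=
    measure_eq_measure_of_null_sdiff (fun x hx => Set.mem_iUnion.2 ⟨0, h 0 hx⟩) hFE
  rw [hEF]
  exact hμ.2 F hF hinv

/-- If every shift maps `L` into `L'`, then `L` is null or `L'` is conull. -/
lemma ErgodicShift.eq_zero_or_eq_one_of_shift {μ : Measure (Config A d)} [IsProbabilityMeasure μ]
    (hμ : ErgodicShift μ) {L L' : Set (Config A d)} (hL' : MeasurableSet L')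
    (h : ∀ r : Site d, L ⊆ shift r ⁻¹' L') : μ L = 0 ∨ μ L' = 1 := by
  let E : Set (Config A d) := ⋂ r : Site d, shift r ⁻¹' L'
  have hE : MeasurableSet E := MeasurableSet.iInter fun r => measurable_shift r hL'
  have hLE : L ⊆ E := Set.subset_iInter h
  have hEL : E ⊆ L' := fun x hx => by
    have := Set.mem_iInter.1 hx 0
    have h0 : shift 0 x = x := by funext i; simp [shift]
    rwa [Set.mem_preimage, h0] at this
  have hsub : ∀ s : Site d, E ⊆ shift s ⁻¹' E := by
    intro s x hx
    refine Set.mem_iInter.2 fun r => ?_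
    rw [Set.mem_preimage, shift_shift]
    exact Set.mem_iInter.1 hx (r + s)
  rcases hμ.measure_eq_zero_or_one hE hsub with h0 | h1
  · exact Or.inl (measure_mono_null hLE h0)
  · exact Or.inr (le_antisymm prob_le_one (h1 ▸ measure_mono hEL))

/-- The sum of `f` along the shifts by `Λ_n`. -/
noncomputable def ergSum (f : Config A d → ℝ) (n : ℕ) (x : Config A d) : ℝ :=
  ∑ t ∈ cube 0 n, f (shift t x)

section ergSum

variable {μ : Measure (Config A d)} {f : Config A d → ℝ}

lemma measurable_ergSum (hf : Measurable f) (n : ℕ) : Measurable (ergSum f n) :=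
  Finset.measurable_fun_sum _ fun t _ => hf.comp (measurable_shift t)

lemma integrable_ergSum (hμ : Stationary μ) (hf : Integrable f μ) (n : ℕ) :
    Integrable (ergSum f n) μ :=
  integrable_finsetSum _ fun t _ => (hμ.measurePreserving t).integrable_comp_of_integrable hf

lemma integral_ergSum (hμ : Stationary μ) (hf : Integrable f μ) (n : ℕ) :
    ∫ x, ergSum f n x ∂μ = (n : ℝ) ^ d * ∫ x, f x ∂μ := by
  have h : ∀ t : Site d, ∫ x, f (shift t x) ∂μ = ∫ x, f x ∂μ := by
    intro t
    conv_rhs => rw [← hμ t]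
    rw [integral_map (measurable_shift t).aemeasurable]
    rw [hμ t]
    exact hf.1
  have hi : ∀ t : Site d, Integrable (fun x => f (shift t x)) μ := fun t =>
    (hμ.measurePreserving t).integrable_comp_of_integrable hf
  simp only [ergSum]
  rw [integral_finsetSum _ fun t _ => hi t]
  simp only [h, Finset.sum_const, card_cube, nsmul_eq_mul, Nat.cast_pow]

lemma ergSum_nonneg (hf : ∀ x, 0 ≤ f x) (n : ℕ) (x : Config A d) : 0 ≤ ergSum f n x :=
  Finset.sum_nonneg fun _ _ => hf _

/-- Markov's inequality for sums along cubes. -/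
lemma measure_ergSum_ge_le (hμ : Stationary μ) (hf : Integrable f μ) (h0 : ∀ x, 0 ≤ f x) {n : ℕ}
    (hn : 1 ≤ n) {a : ℝ} (ha : 0 < a) :
    μ.real {x | a * (n : ℝ) ^ d ≤ ergSum f n x} ≤ (∫ x, f x ∂μ) / a := by
  have h := mul_meas_ge_le_integral_of_nonneg (μ := μ)
    (Eventually.of_forall (ergSum_nonneg h0 n)) (integrable_ergSum hμ hf n) (a * (n : ℝ) ^ d)
  rw [integral_ergSum hμ hf] at h
  have hn' : (0 : ℝ) < (n : ℝ) ^ d := by positivity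
  rw [le_div_iff₀ ha]
  refine le_of_mul_le_mul_left ?_ hn'
  linarith

end ergSum

open Classical in
/-- The sites `r` of `Λ_n` with `σ_r x ∈ B`. -/
noncomputable def visits (B : Set (Config A d)) (n : ℕ) (x : Config A d) : Finset (Site d) :=
  (cube 0 n).filter fun r => shift r x ∈ B

lemma mem_visits {B : Set (Config A d)} {n : ℕ} {x : Config A d} {r : Site d} :
    r ∈ visits B n x ↔ r ∈ cube 0 n ∧ shift r x ∈ B := by
  classical
  simp [visits]

lemma measure_card_visits_ge_le {μ : Measure (Config A d)} [IsProbabilityMeasure μ]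
    (hμ : Stationary μ) {B : Set (Config A d)} (hB : MeasurableSet B) {η : ℝ} (hη : 0 < η)
    (hμB : μ.real B ≤ η ^ 2) {n : ℕ} (hn : 1 ≤ n) :
    μ {x | η * (n : ℝ) ^ d ≤ (visits B n x).card} ≤
      ENNReal.ofReal η := by
  have hint : Integrable (B.indicator fun _ => (1 : ℝ)) μ :=
    (integrable_const 1).indicator hB
  have h := measure_ergSum_ge_le hμ hint (Set.indicator_nonneg fun _ _ => zero_le_one) hn hη
  have h1 : ∫ x, B.indicator (fun _ => (1 : ℝ)) x ∂μ = μ.real B := integral_indicator_one hB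
  have h2 : ∀ x, ergSum (B.indicator fun _ => (1 : ℝ)) n x =
      (visits B n x).card := by
    intro x
    classical simp [ergSum, visits, Set.indicator_apply]
  simp only [h1, h2] at h
  rw [← ofReal_measureReal]
  refine ENNReal.ofReal_le_ofReal (h.trans ?_)
  rw [div_le_iff₀ hη]
  nlinarith

/-- With high probability, all but a fraction `u` of a large cube can be packed by good cubes. -/
def PackingProperty (μ : Measure (Config A d)) (D : ℕ → Set (Config A d)) (u : ℝ) : Prop :=
  ∀ δ : ℝ, 0 < δ → ∀ m : ℕ, ∃ M : ℕ, ∀ᶠ N : ℕ in atTop,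
    μ {x | ¬ ∃ P, IsPacking (fun n => {r | shift r x ∈ D n}) m M N P ∧
      (1 - u - δ) * (N : ℝ) ^ d ≤ packVol P} ≤ ENNReal.ofReal δ

lemma packingProperty_one (μ : Measure (Config A d)) (D : ℕ → Set (Config A d)) :
    PackingProperty μ D 1 := by
  intro δ hδ m
  refine ⟨0, Eventually.of_forall fun N => ?_⟩
  have : {x | ¬ ∃ P, IsPacking (fun n => {r | shift r x ∈ D n}) m 0 N P ∧
      (1 - 1 - δ) * (N : ℝ) ^ d ≤ packVol P} = ∅ := by
    rw [Set.eq_empty_iff_forall_notMem]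
    intro x hx
    refine hx ⟨∅, ⟨by simp, by simp, by simp, by simp⟩, ?_⟩
    have : 0 ≤ δ * (N : ℝ) ^ d := by positivity
    simp [packVol]
    linarith
  rw [this]
  simp

lemma measurableSet_no_scale {D : ℕ → Set (Config A d)} (hD : ∀ n, MeasurableSet (D n))
    (m M : ℕ) : MeasurableSet {x | ¬ ∃ n, m ≤ n ∧ n ≤ M ∧ x ∈ D n} := by
  have : {x | ¬ ∃ n, m ≤ n ∧ n ≤ M ∧ x ∈ D n} = (⋃ n, ⋃ (_ : m ≤ n), ⋃ (_ : n ≤ M), D n)ᶜ := by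
    ext x; simp
  rw [this]
  exact (MeasurableSet.iUnion fun n => MeasurableSet.iUnion fun _ =>
    MeasurableSet.iUnion fun _ => hD n).compl

lemma exists_scale_bound {μ : Measure (Config A d)} [IsProbabilityMeasure μ]
    {D : ℕ → Set (Config A d)} (hD : ∀ n, MeasurableSet (D n))
    (hio : ∀ᵐ x ∂μ, ∃ᶠ n in atTop, x ∈ D n) (m : ℕ) {ε : ℝ} (hε : 0 < ε) :
    ∃ M, μ.real {x | ¬ ∃ n, m ≤ n ∧ n ≤ M ∧ x ∈ D n} ≤ ε := by
  let B : ℕ → Set (Config A d) := fun M => {x | ¬ ∃ n, m ≤ n ∧ n ≤ M ∧ x ∈ D n}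
  have hB : ∀ M, MeasurableSet (B M) := fun M => measurableSet_no_scale hD m M
  have hanti : Antitone B := fun a b hab x hx ⟨n, h1, h2, h3⟩ => hx ⟨n, h1, h2.trans hab, h3⟩
  have hnull : μ (⋂ M, B M) = 0 := by
    refine measure_mono_null ?_ (ae_iff.1 hio)
    intro x hx hf
    obtain ⟨n, hn, hxn⟩ := (frequently_atTop.1 hf) m
    exact Set.mem_iInter.1 hx n ⟨n, hn, le_rfl, hxn⟩
  have hlim := tendsto_measure_iInter_atTop (μ := μ) (fun M => (hB M).nullMeasurableSet) hanti
    ⟨0, measure_ne_top _ _⟩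
  rw [hnull] at hlim
  obtain ⟨M, hM⟩ := (hlim.eventually_le_const (ENNReal.ofReal_pos.2 hε)).exists
  exact ⟨M, ENNReal.toReal_le_of_le_ofReal hε.le hM⟩

lemma exists_ratio_bound (d M : ℕ) {η : ℝ} (hη : 0 < η) :
    ∃ m₀ : ℕ, ∀ n : ℕ, m₀ ≤ n → ((n : ℝ) + M) ^ d ≤ (1 + η) * (n : ℝ) ^ d := by
  have h1 : Tendsto (fun n : ℕ => (1 + (M : ℝ) / n) ^ d) atTop (𝓝 ((1 + 0) ^ d)) :=
    (tendsto_const_nhds.add (tendsto_const_div_atTop_nhds_zero_nat _)).pow d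
  rw [add_zero, one_pow] at h1
  obtain ⟨m₀, hm₀⟩ := eventually_atTop.1 (h1.eventually_le_const (show (1 : ℝ) < 1 + η by linarith))
  refine ⟨max m₀ 1, fun n hn => ?_⟩
  have hn0 : (0 : ℝ) < n := by exact_mod_cast (le_max_right _ _).trans hn
  calc ((n : ℝ) + M) ^ d = (1 + (M : ℝ) / n) ^ d * (n : ℝ) ^ d := by
        rw [← mul_pow]; congr 1; field_simp
    _ ≤ _ := by gcongr; exact hm₀ n ((le_max_left _ _).trans hn)

lemma eventually_sub_pow_ge (d M : ℕ) {η : ℝ} (hη : 0 < η) :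
    ∀ᶠ N : ℕ in atTop, (1 - η) * (N : ℝ) ^ d ≤ ((N - M : ℕ) : ℝ) ^ d := by
  have h1 : Tendsto (fun n : ℕ => (1 - (M : ℝ) / n) ^ d) atTop (𝓝 ((1 - 0) ^ d)) :=
    (tendsto_const_nhds.sub (tendsto_const_div_atTop_nhds_zero_nat _)).pow d
  rw [sub_zero, one_pow] at h1
  filter_upwards [h1.eventually_const_le (show 1 - η < 1 by linarith), eventually_ge_atTop (M + 1)]
    with N hN hNM
  have hn0 : (0 : ℝ) < N := by exact_mod_cast (show 0 < N by omega)
  rw [Nat.cast_sub (by omega)]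
  calc _ ≤ (1 - (M : ℝ) / N) ^ d * (N : ℝ) ^ d := by gcongr
    _ = _ := by rw [← mul_pow]; congr 1; field_simp

/-- One more scale in the packing reduces the uncovered fraction by a constant factor. -/
lemma PackingProperty.step {μ : Measure (Config A d)} [IsProbabilityMeasure μ]
    (hμ : Stationary μ) {D : ℕ → Set (Config A d)} (hD : ∀ n, MeasurableSet (D n))
    (hio : ∀ᵐ x ∂μ, ∃ᶠ n in atTop, x ∈ D n) {u : ℝ}
    (h : PackingProperty μ D u) : PackingProperty μ D ((1 - (2 ^ d)⁻¹) * u) := by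
  intro δ hδ m
  set η : ℝ := δ / 4 with hη
  have hη0 : 0 < η := by positivity
  obtain ⟨M₁, hM₁⟩ := exists_scale_bound hD hio (max m 1) (ε := η ^ 2) (by positivity)
  obtain ⟨m₀, hm₀⟩ := exists_ratio_bound d M₁ hη0
  obtain ⟨M₂, hM₂⟩ := h η hη0 (max m₀ (max m 1))
  refine ⟨max M₁ M₂, ?_⟩
  filter_upwards [hM₂, eventually_sub_pow_ge d M₁ hη0, eventually_ge_atTop 1] with N hN hsub hN1
  let B : Set (Config A d) := {x | ¬ ∃ n, max m 1 ≤ n ∧ n ≤ M₁ ∧ x ∈ D n}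
  have hcount := measure_card_visits_ge_le (B := B) hμ
    (measurableSet_no_scale hD (max m 1) M₁) hη0 hM₁ hN1
  refine (measure_mono (t := {x | ¬ ∃ P, IsPacking (fun n => {r | shift r x ∈ D n})
      (max m₀ (max m 1)) M₂ N P ∧ (1 - u - η) * (N : ℝ) ^ d ≤ packVol P} ∪
      {x | η * (N : ℝ) ^ d ≤ (visits B N x).card}) ?_).trans
    ((measure_union_le _ _).trans ((add_le_add hN hcount).trans ?_))
  · intro x hx
    by_contra hx'
    rw [Set.mem_union, not_or] at hx'
    obtain ⟨h1, h2⟩ := hx'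
    simp only [Set.mem_ofPred_eq, not_not, not_le] at h1 h2
    obtain ⟨P, hP, hvol⟩ := h1
    obtain ⟨P', hP', hineq⟩ := hP.extend (m := max m 1) (M := M₁) (le_max_right _ _)
      (le_max_right _ _) (visits B N x) fun r hr hrB =>
        by_contra fun hne => hrB (mem_visits.2 ⟨hr, hne⟩)
    refine hx ⟨P', ⟨fun p hp => ⟨(le_max_left _ _).trans (hP'.scale p hp).1,
      (hP'.scale p hp).2⟩, hP'.subset, hP'.disj, hP'.good⟩, ?_⟩
    have hsum : ∑ p ∈ P, ((p.2 : ℝ) + M₁) ^ d ≤ (1 + η) * packVol P := by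
      rw [packVol, Nat.cast_sum, Finset.mul_sum]
      refine Finset.sum_le_sum fun p hp => ?_
      rw [Nat.cast_pow]
      exact hm₀ _ ((le_max_left _ _).trans (hP.scale p hp).1)
    have hV : (packVol P : ℝ) ≤ (N : ℝ) ^ d := by exact_mod_cast hP.packVol_le
    have hineq' : ((N - M₁ : ℕ) : ℝ) ^ d + 2 ^ d * packVol P ≤
        (visits B N x).card +
          ∑ p ∈ P, ((p.2 : ℝ) + M₁) ^ d + 2 ^ d * packVol P' := by
      exact_mod_cast hineq
    have hQ : (1 : ℝ) ≤ 2 ^ d := one_le_pow₀ (by norm_num)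
    generalize (2 : ℝ) ^ d = Q at *
    generalize (N : ℝ) ^ d = X at *
    have hX : 0 ≤ X := (Nat.cast_nonneg _).trans hV
    have hQ0 : 0 < Q := by linarith
    have e1 : Q * ((1 - (1 - Q⁻¹) * u - δ) * X) = (Q - (Q - 1) * u - Q * δ) * X := by
      field_simp
    refine le_of_mul_le_mul_left ?_ hQ0
    rw [e1]
    have e2 : (Q - 1) * ((1 - u - η) * X) ≤ (Q - 1) * packVol P := by gcongr
    have e3 : η * packVol P ≤ η * X := by gcongr
    have e4 : 0 ≤ (Q - 1) * (η * X) := mul_nonneg (by linarith) (by positivity)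
    have e5 : δ = 4 * η := by rw [hη]; ring
    rw [e5]
    nlinarith
  · rw [← ENNReal.ofReal_add hη0.le hη0.le]
    exact ENNReal.ofReal_le_ofReal (by linarith)

/-- If almost every point is the corner of arbitrarily large good cubes, then large cubes are
almost entirely packed by good cubes, with high probability. -/
theorem packingProperty_zero {μ : Measure (Config A d)} [IsProbabilityMeasure μ]
    (hμ : Stationary μ) {D : ℕ → Set (Config A d)} (hD : ∀ n, MeasurableSet (D n))
    (hio : ∀ᵐ x ∂μ, ∃ᶠ n in atTop, x ∈ D n) : PackingProperty μ D 0 := by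
  have hind : ∀ j : ℕ, PackingProperty μ D ((1 - (2 ^ d)⁻¹) ^ j) := by
    intro j
    induction j with
    | zero => simpa using packingProperty_one μ D
    | succ j ih => rw [pow_succ']; exact ih.step hμ hD hio
  intro δ hδ m
  have hQ : (1 : ℝ) ≤ 2 ^ d := one_le_pow₀ (by norm_num)
  have hlim := tendsto_pow_atTop_nhds_zero_of_lt_one (r := 1 - ((2 : ℝ) ^ d)⁻¹)
    (by linarith [inv_le_one_of_one_le₀ hQ]) (by linarith [inv_pos.2 (zero_lt_one.trans_le hQ)])
  obtain ⟨j, hj⟩ := (hlim.eventually_le_const (half_pos hδ)).exists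
  obtain ⟨M, hM⟩ := hind j (δ / 2) (half_pos hδ) m
  refine ⟨M, hM.mono fun N hN => ?_⟩
  refine (measure_mono ?_).trans (hN.trans (ENNReal.ofReal_le_ofReal (by linarith)))
  rintro x hx ⟨P, hP, hvol⟩
  refine hx ⟨P, hP, le_trans (mul_le_mul_of_nonneg_right ?_ (by positivity)) hvol⟩
  linarith

lemma measurableSet_frequently_mem {X : Type*} [MeasurableSpace X] {D : ℕ → Set X}
    (hD : ∀ n, MeasurableSet (D n)) : MeasurableSet {x | ∃ᶠ n in atTop, x ∈ D n} := by
  simp only [frequently_atTop, Set.ofPred_forall]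
  refine MeasurableSet.iInter fun a => ?_
  have : {x | ∃ b ≥ a, x ∈ D b} = ⋃ b, ⋃ (_ : b ≥ a), D b := by ext x; simp
  rw [this]
  exact MeasurableSet.iUnion fun b => MeasurableSet.iUnion fun _ => hD b

lemma sum_cube (r : Site d) (n : ℕ) (g : Site d → ℝ) :
    ∑ t ∈ cube r n, g t = ∑ t ∈ cube 0 n, g (t + r) := by
  refine Finset.sum_nbij' (fun t => t - r) (fun t => t + r) ?_ ?_ ?_ ?_ ?_
  · intro t ht
    rw [mem_cube_zero]
    intro j
    have := mem_cube.1 ht j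
    simp only [Pi.sub_apply]
    omega
  · intro t ht
    rw [mem_cube]
    intro j
    have := mem_cube_zero.1 ht j
    simp only [Pi.add_apply]
    omega
  · intro t ht
    funext j
    have := mem_cube.1 ht j
    simp only [Pi.add_apply, Pi.sub_apply]
    omega
  · intro t ht
    simp
  · intro t ht
    congr 1
    funext j
    have := mem_cube.1 ht j
    simp only [Pi.add_apply, Pi.sub_apply]
    omega

lemma ergSum_shift (f : Config A d → ℝ) (n : ℕ) (r : Site d) (x : Config A d) :
    ergSum f n (shift r x) = ∑ t ∈ cube r n, f (shift t x) := by
  rw [sum_cube, ergSum]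
  simp only [shift_shift]

lemma le_sum_coord (r : Site d) (j : Fin d) : r j ≤ ∑ i, r i :=
  Finset.single_le_sum (fun _ _ => Nat.zero_le _) (Finset.mem_univ j)

lemma ergSum_shift_le {f : Config A d → ℝ} (hf : ∀ x, 0 ≤ f x) (n : ℕ) (r : Site d)
    (x : Config A d) : ergSum f n (shift r x) ≤ ergSum f (n + ∑ j, r j) x := by
  rw [ergSum_shift]
  refine Finset.sum_le_sum_of_subset_of_nonneg (fun t ht => ?_) fun _ _ _ => hf _
  rw [mem_cube_zero]
  intro j
  have := mem_cube.1 ht j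
  have := le_sum_coord r j
  omega

/-- A packing by cubes with large average forces a large average. -/
lemma le_ergSum_of_isPacking {f : Config A d → ℝ} (hf : ∀ x, 0 ≤ f x) {c : ℝ} {x : Config A d}
    {m M N : ℕ} {P : Finset (Site d × ℕ)}
    (hP : IsPacking (fun n => {r | shift r x ∈ {y | c * (n : ℝ) ^ d ≤ ergSum f n y}}) m M N P) :
    c * packVol P ≤ ergSum f N x := by
  classical
  calc c * packVol P = ∑ p ∈ P, c * (p.2 : ℝ) ^ d := by
        rw [packVol, Nat.cast_sum, Finset.mul_sum]
        simp
    _ ≤ ∑ p ∈ P, ∑ t ∈ cube p.1 p.2, f (shift t x) := by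
        refine Finset.sum_le_sum fun p hp => ?_
        rw [← ergSum_shift]
        exact hP.good p hp
    _ = ∑ t ∈ P.biUnion fun p => cube p.1 p.2, f (shift t x) :=
        (Finset.sum_biUnion hP.disj).symm
    _ ≤ _ := Finset.sum_le_sum_of_subset_of_nonneg (Finset.biUnion_subset.2 hP.subset)
        fun _ _ _ => hf _

/-- The upper half of the pointwise ergodic theorem, for nonnegative integrable functions. -/
theorem ErgodicShift.eventually_ergSum_le {μ : Measure (Config A d)} [IsProbabilityMeasure μ]
    (hμ : ErgodicShift μ) {f : Config A d → ℝ} (hfm : Measurable f) (hf : ∀ x, 0 ≤ f x)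
    (hfi : Integrable f μ) {c : ℝ} (hc : ∫ x, f x ∂μ < c) :
    ∀ᵐ x ∂μ, ∀ᶠ n : ℕ in atTop, ergSum f n x ≤ c * (n : ℝ) ^ d := by
  have hI : 0 ≤ ∫ x, f x ∂μ := integral_nonneg hf
  obtain ⟨c₁, hc₁, hcc⟩ := exists_between hc
  have hc₁0 : 0 < c₁ := hI.trans_lt hc₁
  let D : ℝ → ℕ → Set (Config A d) := fun a n => {x | a * (n : ℝ) ^ d ≤ ergSum f n x}
  have hD : ∀ a n, MeasurableSet (D a n) := fun a n =>
    measurableSet_le measurable_const (measurable_ergSum hfm n)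
  let L : ℝ → Set (Config A d) := fun a => {x | ∃ᶠ n in atTop, x ∈ D a n}
  have hL : ∀ a, MeasurableSet (L a) := fun a => measurableSet_frequently_mem (hD a)
  have hshift : ∀ r : Site d, (L c₁)ᶜ ⊆ shift r ⁻¹' (L c)ᶜ := by
    intro r x hx hxr
    refine hx ?_
    obtain ⟨n₀, hn₀⟩ := exists_ratio_bound d (∑ j, r j) (η := c / c₁ - 1)
      (by rw [sub_pos, one_lt_div hc₁0]; exact hcc)
    have : ∃ᶠ n in atTop, x ∈ D c₁ (n + ∑ j, r j) := by
      have hxr' : ∃ᶠ n in atTop, shift r x ∈ D c n := hxr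
      refine (hxr'.and_eventually (eventually_ge_atTop n₀)).mono fun n hn => ?_
      refine le_trans ?_ (hn.1.trans (ergSum_shift_le hf n r x))
      calc c₁ * ((n + ∑ j, r j : ℕ) : ℝ) ^ d = c₁ * ((n : ℝ) + (∑ j, r j : ℕ)) ^ d := by
            rw [Nat.cast_add]
        _ ≤ c₁ * ((1 + (c / c₁ - 1)) * (n : ℝ) ^ d) := by gcongr; exact hn₀ n hn.2
        _ = c * (n : ℝ) ^ d := by field_simp; ring
    exact (tendsto_add_atTop_nat _).frequently this
  rcases hμ.eq_zero_or_eq_one_of_shift (hL c).compl hshift with h0 | h1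
  · exfalso
    have hio : ∀ᵐ x ∂μ, ∃ᶠ n in atTop, x ∈ D c₁ n := by
      rw [ae_iff]; exact h0
    set I := ∫ x, f x ∂μ with hIdef
    set δ : ℝ := (c₁ - I) / (4 * c₁) with hδ
    have hδ0 : 0 < δ := div_pos (by linarith) (by linarith)
    have hδc : δ * c₁ = (c₁ - I) / 4 := by rw [hδ]; field_simp
    have hδ1 : δ < 1 := by nlinarith
    obtain ⟨M, hM⟩ := packingProperty_zero hμ.1 (hD c₁) hio δ hδ0 0
    obtain ⟨N, hN, hN1⟩ := (hM.and (eventually_ge_atTop 1)).exists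
    have ha : 0 < c₁ * (1 - δ) := mul_pos hc₁0 (by linarith)
    have hmarkov := measure_ergSum_ge_le hμ.1 hfi hf hN1 ha
    set S := {x | c₁ * (1 - δ) * (N : ℝ) ^ d ≤ ergSum f N x} with hS
    have hSm : MeasurableSet S := measurableSet_le measurable_const (measurable_ergSum hfm N)
    have hSc : μ Sᶜ ≤ ENNReal.ofReal δ := by
      refine (measure_mono fun x hx => ?_).trans hN
      rintro ⟨P, hP, hvol⟩
      refine hx ?_
      have := le_ergSum_of_isPacking hf hP
      rw [sub_zero] at hvol
      calc c₁ * (1 - δ) * (N : ℝ) ^ d = c₁ * ((1 - δ) * (N : ℝ) ^ d) := by ring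
        _ ≤ c₁ * packVol P := by gcongr
        _ ≤ _ := this
    have hSr : μ.real Sᶜ ≤ δ := ENNReal.toReal_le_of_le_ofReal hδ0.le hSc
    rw [probReal_compl_eq_one_sub hSm] at hSr
    have : 1 - δ ≤ I / (c₁ * (1 - δ)) := by linarith
    rw [le_div_iff₀ ha] at this
    nlinarith
  · have : ∀ᵐ x ∂μ, x ∈ (L c)ᶜ := by
      rw [ae_iff]
      exact (prob_compl_eq_zero_iff (hL c).compl).2 h1
    filter_upwards [this] with x hx
    have hx' : ∀ᶠ n in atTop, ¬ x ∈ D c n := not_frequently.1 hx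
    exact hx'.mono fun n hn => (not_le.1 hn).le

lemma wordAt_shift (x : Config A d) (n : ℕ) (r c : Site d) :
    wordAt (shift r x) n c = wordAt x n (c + r) := by
  funext i
  simp only [wordAt, shift]
  congr 1
  funext j
  simp only [Pi.add_apply]
  ring

/-- The number of words compatible with one given packing. -/
lemma ncard_compatible_le (hA : 2 ≤ A) {c : ℝ} (S : ∀ n, Set (Word A d n))
    (hS : ∀ n, ((S n).ncard : ℝ) ≤ (A : ℝ) ^ (c * (n : ℝ) ^ d)) {N : ℕ}
    (P : Finset (Site d × ℕ)) (hsub : ∀ p ∈ P, cube p.1 p.2 ⊆ cube 0 N)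
    (hdisj : (P : Set (Site d × ℕ)).PairwiseDisjoint fun p => cube p.1 p.2) :
    (((fun x : Config A d => wordAt x N 0) '' {x | ∀ p ∈ P, wordAt x p.2 p.1 ∈ S p.2}).ncard : ℝ) ≤
      (A : ℝ) ^ (c * packVol P + ((N : ℝ) ^ d - packVol P)) := by
  classical
  have hA0 : (0 : ℝ) < A := by positivity
  have hmem : ∀ (p : P) (i : Fin d → Fin p.1.2), (fun j => p.1.1 j + (i j : ℕ)) ∈ cube p.1.1 p.1.2 :=
    fun p i => mem_cube.2 fun j => ⟨by omega, by have := (i j).2; omega⟩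
  let e : (p : P) → (Fin d → Fin p.1.2) → (Fin d → Fin N) := fun p i j =>
    ⟨p.1.1 j + i j, mem_cube_zero.1 (hsub p.1 p.2 (hmem p i)) j⟩
  have he : Function.Injective fun q : (Σ p : P, (Fin d → Fin p.1.2)) => e q.1 q.2 := by
    rintro ⟨p, i⟩ ⟨q, k⟩ h
    have h' : (fun j => p.1.1 j + (i j : ℕ)) = fun j => q.1.1 j + (k j : ℕ) := by
      funext j
      exact congrArg Fin.val (congrFun h j)
    have hpq : p = q := by
      by_contra hne
      have := hdisj p.2 q.2 fun h => hne (Subtype.ext h)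
      exact Finset.disjoint_left.1 this (hmem p i) (h' ▸ hmem q k)
    subst hpq
    congr 1
    funext j
    have := congrFun h' j
    exact Fin.ext (by omega)
  have key := sum_prod_restrict (α := Fin A) e he
    fun p v => (S p.1.2).indicator (fun _ => (1 : ℝ)) v
  have hind : ∀ n, ∑ v, (S n).indicator (fun _ => (1 : ℝ)) v = (S n).ncard := by
    intro n
    rw [sum_indicator_const, mul_one]
  have hvol : ∑ p : P, Fintype.card (Fin d → Fin p.1.2) = packVol P := by
    rw [packVol, ← Finset.sum_coe_sort P]
    simp
  have hle : packVol P ≤ N ^ d := by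
    rw [← card_cube 0 N, packVol, ← Finset.sum_congr rfl fun p _ => card_cube p.1 p.2,
      ← Finset.card_biUnion fun x hx y hy hxy => hdisj hx hy hxy]
    exact Finset.card_le_card (Finset.biUnion_subset.2 hsub)
  simp only [hind] at key
  rw [hvol] at key
  set T := (fun x : Config A d => wordAt x N 0) '' {x | ∀ p ∈ P, wordAt x p.2 p.1 ∈ S p.2} with hT
  calc (T.ncard : ℝ) = ∑ w : Word A d N, T.indicator (fun _ => (1 : ℝ)) w := by
        rw [sum_indicator_const, mul_one]
    _ ≤ ∑ w : (Fin d → Fin N) → Fin A,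
        ∏ p : P, (S p.1.2).indicator (fun _ => (1 : ℝ)) (fun v => w (e p v)) := by
        refine Finset.sum_le_sum fun w _ => ?_
        by_cases hw : w ∈ T
        · rw [Set.indicator_of_mem hw]
          obtain ⟨x, hx, rfl⟩ := hw
          refine (Finset.prod_eq_one fun p _ => ?_).ge
          refine Set.indicator_of_mem ?_ _
          have := hx p.1 p.2
          convert this using 1
          funext i
          simp [wordAt, e]
        · rw [Set.indicator_of_notMem hw]
          exact Finset.prod_nonneg fun p _ => Set.indicator_nonneg (fun _ _ => zero_le_one) _
    _ = _ := key
    _ ≤ (∏ p : P, (A : ℝ) ^ (c * (p.1.2 : ℝ) ^ d)) * (A : ℝ) ^ ((N : ℝ) ^ d - packVol P) := by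
        rw [← Real.rpow_natCast]
        simp only [Fintype.card_fin, Fintype.card_fun]
        rw [Nat.cast_sub hle, Nat.cast_pow]
        gcongr with p
        exact hS _
    _ = _ := by
        rw [Finset.prod_coe_sort P fun p => (A : ℝ) ^ (c * (p.2 : ℝ) ^ d),
          ← Real.rpow_sum_of_pos hA0, ← Real.rpow_add hA0, ← Finset.mul_sum, packVol]
        simp

/-- The number of packings with all scales at least `m` has small exponential rate. -/
lemma card_packings_le (hA : 2 ≤ A) (hd : 1 ≤ d) {ε : ℝ} (hε : 0 < ε) :
    ∃ m : ℕ, ∀ (M N : ℕ) (Q : Finset (Finset (Site d × ℕ))),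
      (∀ P ∈ Q, P ⊆ cube 0 N ×ˢ Finset.Ico m M) → (∀ P ∈ Q, packVol P ≤ N ^ d) →
      (Q.card : ℝ) ≤ (A : ℝ) ^ (2 * ε * (N : ℝ) ^ d) := by
  classical
  have hA1 : (1 : ℝ) < A := by exact_mod_cast hA
  have hA0 : (0 : ℝ) < A := by positivity
  have hlog : 0 < Real.log A := Real.log_pos hA1
  set ρ : ℝ := (A : ℝ) ^ (-ε) with hρ
  have hρ0 : 0 < ρ := Real.rpow_pos_of_pos hA0 _
  have hρ1 : ρ < 1 := Real.rpow_lt_one_of_one_lt_of_neg hA1 (by linarith)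
  have hlim : Tendsto (fun m : ℕ => ρ ^ m / (1 - ρ)) atTop (𝓝 (0 / (1 - ρ))) :=
    (tendsto_pow_atTop_nhds_zero_of_lt_one hρ0.le hρ1).div_const _
  rw [zero_div] at hlim
  obtain ⟨m, hm⟩ := (hlim.eventually_le_const (show 0 < ε * Real.log A by positivity)).exists
  refine ⟨m, fun M N Q hQ hQv => ?_⟩
  let a : Site d × ℕ → ℝ := fun p => ρ ^ (p.2 ^ d)
  have hprod : ∀ P : Finset (Site d × ℕ), ∏ p ∈ P, a p = ρ ^ packVol P := fun P => by
    simp only [a, packVol, Finset.prod_pow_eq_pow_sum]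
  have hlow : (Q.card : ℝ) * ρ ^ (N ^ d) ≤ ∑ P ∈ Q, ∏ p ∈ P, a p := by
    rw [← nsmul_eq_mul, ← Finset.sum_const]
    refine Finset.sum_le_sum fun P hP => ?_
    rw [hprod]
    exact pow_le_pow_of_le_one hρ0.le hρ1.le (hQv P hP)
  have hup : ∑ P ∈ Q, ∏ p ∈ P, a p ≤ Real.exp (ε * Real.log A * (N : ℝ) ^ d) := by
    calc ∑ P ∈ Q, ∏ p ∈ P, a p
        ≤ ∑ P ∈ (cube 0 N ×ˢ Finset.Ico m M).powerset, ∏ p ∈ P, a p :=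
          Finset.sum_le_sum_of_subset_of_nonneg (fun P hP => Finset.mem_powerset.2 (hQ P hP))
            fun P _ _ => Finset.prod_nonneg fun p _ => by positivity
      _ = ∏ p ∈ cube 0 N ×ˢ Finset.Ico m M, (1 + a p) := (Finset.prod_one_add _).symm
      _ ≤ ∏ p ∈ cube 0 N ×ˢ Finset.Ico m M, Real.exp (a p) :=
          Finset.prod_le_prod (fun p _ => by positivity) fun p _ => by
            rw [add_comm]; exact Real.add_one_le_exp _
      _ = Real.exp (∑ p ∈ cube 0 N ×ˢ Finset.Ico m M, a p) := (Real.exp_sum _ _).symm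
      _ ≤ _ := by
          refine Real.exp_le_exp.2 ?_
          simp only [a]
          rw [Finset.sum_product]
          simp only [Finset.sum_const, card_cube, nsmul_eq_mul, Nat.cast_pow]
          rw [mul_comm]
          gcongr
          calc ∑ n ∈ Finset.Ico m M, ρ ^ (n ^ d) ≤ ∑ n ∈ Finset.Ico m M, ρ ^ n :=
                Finset.sum_le_sum fun n _ =>
                  pow_le_pow_of_le_one hρ0.le hρ1.le (Nat.le_self_pow (by omega) n)
            _ ≤ ρ ^ m / (1 - ρ) := geom_sum_Ico_le_of_lt_one hρ0.le hρ1
            _ ≤ _ := hm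
  have hmain := hlow.trans hup
  have e1 : ρ ^ (N ^ d) = (A : ℝ) ^ (-(ε * (N : ℝ) ^ d)) := by
    rw [hρ, ← Real.rpow_natCast, ← Real.rpow_mul hA0.le]
    congr 1
    push_cast
    ring
  have e2 : Real.exp (ε * Real.log A * (N : ℝ) ^ d) = (A : ℝ) ^ (ε * (N : ℝ) ^ d) := by
    rw [Real.rpow_def_of_pos hA0]
    congr 1
    ring
  rw [e1, e2, Real.rpow_neg hA0.le, ← div_eq_mul_inv,
    div_le_iff₀ (Real.rpow_pos_of_pos hA0 _), ← Real.rpow_add hA0] at hmain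
  refine hmain.trans (le_of_eq ?_)
  congr 1
  ring

/-- Words that are mostly packed by words from small sets are few. -/
lemma ncard_packed_le (hA : 2 ≤ A) (hd : 1 ≤ d) {c ε : ℝ} (hc : 0 ≤ c) (hε : 0 < ε) :
    ∃ m : ℕ, ∀ S : ∀ n, Set (Word A d n),
      (∀ n, ((S n).ncard : ℝ) ≤ (A : ℝ) ^ (c * (n : ℝ) ^ d)) → ∀ M N : ℕ,
      (((fun x : Config A d => wordAt x N 0) ''
        {x | ∃ P, IsPacking (fun n => {r | wordAt x n r ∈ S n}) m M N P ∧
          (1 - ε) * (N : ℝ) ^ d ≤ packVol P}).ncard : ℝ) ≤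
        (A : ℝ) ^ ((c + 3 * ε) * (N : ℝ) ^ d) := by
  classical
  have hA1 : (1 : ℝ) < A := by exact_mod_cast hA
  have hA0 : (0 : ℝ) < A := by positivity
  obtain ⟨m, hm⟩ := card_packings_le hA hd hε
  refine ⟨max m 1, fun S hS M N => ?_⟩
  let Q : Finset (Finset (Site d × ℕ)) := (cube 0 N ×ˢ Finset.Ico m (M + 1)).powerset.filter
    fun P => (∀ p ∈ P, cube p.1 p.2 ⊆ cube 0 N) ∧
      (P : Set (Site d × ℕ)).PairwiseDisjoint (fun p => cube p.1 p.2) ∧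
      (1 - ε) * (N : ℝ) ^ d ≤ packVol P
  have hvolQ : ∀ P ∈ Q, packVol P ≤ N ^ d := by
    intro P hP
    obtain ⟨-, h1, h2, -⟩ := Finset.mem_filter.1 hP
    exact IsPacking.packVol_le (G := fun _ => Set.univ) (m := 0) (M := P.sup Prod.snd)
      ⟨fun p hp => ⟨Nat.zero_le _, Finset.le_sup (f := Prod.snd) hp⟩, h1, h2, fun _ _ => trivial⟩
  have hQcard := hm (M + 1) N Q
    (fun P hP => Finset.mem_powerset.1 (Finset.mem_filter.1 hP).1) hvolQ
  have hsub : ((fun x : Config A d => wordAt x N 0) ''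
        {x | ∃ P, IsPacking (fun n => {r | wordAt x n r ∈ S n}) (max m 1) M N P ∧
          (1 - ε) * (N : ℝ) ^ d ≤ packVol P}) ⊆
      ⋃ P ∈ Q, (fun x : Config A d => wordAt x N 0) '' {x | ∀ p ∈ P, wordAt x p.2 p.1 ∈ S p.2} := by
    rintro _ ⟨x, ⟨P, hP, hvol⟩, rfl⟩
    refine Set.mem_biUnion (x := P) ?_ ⟨x, hP.good, rfl⟩
    refine Finset.mem_filter.2 ⟨Finset.mem_powerset.2 fun p hp => ?_, hP.subset, hP.disj, hvol⟩
    have h1 := hP.scale p hp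
    refine Finset.mem_product.2 ⟨?_, Finset.mem_Ico.2 ⟨(le_max_left _ _).trans h1.1, by omega⟩⟩
    exact hP.subset p hp (self_mem_cube ((le_max_right _ _).trans h1.1))
  calc _ ≤ ((⋃ P ∈ Q, (fun x : Config A d => wordAt x N 0) ''
          {x | ∀ p ∈ P, wordAt x p.2 p.1 ∈ S p.2}).ncard : ℝ) := by
        exact_mod_cast Set.ncard_le_ncard hsub (Set.toFinite _)
    _ ≤ ∑ P ∈ Q, (((fun x : Config A d => wordAt x N 0) ''
          {x | ∀ p ∈ P, wordAt x p.2 p.1 ∈ S p.2}).ncard : ℝ) := by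
        exact_mod_cast Finset.set_ncard_biUnion_le Q _
    _ ≤ ∑ P ∈ Q, (A : ℝ) ^ ((c + ε) * (N : ℝ) ^ d) := by
        refine Finset.sum_le_sum fun P hP => ?_
        obtain ⟨-, h1, h2, h3⟩ := Finset.mem_filter.1 hP
        refine (ncard_compatible_le hA S hS P h1 h2).trans
          (Real.rpow_le_rpow_of_exponent_le hA1.le ?_)
        have : (packVol P : ℝ) ≤ (N : ℝ) ^ d := by exact_mod_cast hvolQ P hP
        have := mul_le_mul_of_nonneg_left this hc
        linarith
    _ = Q.card * (A : ℝ) ^ ((c + ε) * (N : ℝ) ^ d) := by rw [Finset.sum_const, nsmul_eq_mul]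
    _ ≤ (A : ℝ) ^ (2 * ε * (N : ℝ) ^ d) * (A : ℝ) ^ ((c + ε) * (N : ℝ) ^ d) := by gcongr
    _ = _ := by
        rw [← Real.rpow_add hA0]
        congr 1
        ring

lemma measurable_wordAt (n : ℕ) (c : Site d) :
    Measurable fun x : Config A d => wordAt x n c :=
  measurable_pi_lambda _ fun i => measurable_pi_apply fun j => c j + (i j : ℕ)

lemma wordDist_eq (μ : Measure (Config A d)) (n : ℕ) (w : Word A d n) :
    wordDist μ n w = μ.real {x | wordAt x n 0 = w} := rfl

lemma wordDist_nonneg (μ : Measure (Config A d)) (n : ℕ) (w : Word A d n) :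
    0 ≤ wordDist μ n w := ENNReal.toReal_nonneg

/-- The total `μ^n`-mass of a set of words. -/
lemma sum_indicator_wordDist (μ : Measure (Config A d)) [IsProbabilityMeasure μ] (n : ℕ)
    (S : Set (Word A d n)) :
    ∑ w, S.indicator (wordDist μ n) w = μ.real {x | wordAt x n 0 ∈ S} := by
  classical
  have h : {x : Config A d | wordAt x n 0 ∈ S} =
      ⋃ w ∈ S.toFinset, {x | wordAt x n 0 = w} := by
    ext x
    simp
  rw [h, measureReal_biUnion_finset]
  · simp only [Set.indicator_apply, ← wordDist_eq]
    rw [← Finset.sum_filter]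
    congr 1
    ext w
    simp
  · intro v _ w _ hvw
    exact Set.disjoint_left.2 fun x hv hw => hvw (hv.symm.trans hw)
  · intro w _
    exact measurable_wordAt n 0 (MeasurableSet.singleton w)

lemma sum_wordDist (μ : Measure (Config A d)) [IsProbabilityMeasure μ] (n : ℕ) :
    ∑ w, wordDist μ n w = 1 := by
  have := sum_indicator_wordDist μ n Set.univ
  simpa using this

/-- A word is at most as likely as any of its cubical subwords. -/
lemma wordDist_le_of_shift {μ : Measure (Config A d)} [IsProbabilityMeasure μ] (hμ : Stationary μ)
    (n : ℕ) (r : Site d) (x : Config A d) :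
    wordDist μ (n + ∑ j, r j) (wordAt x (n + ∑ j, r j) 0) ≤
      wordDist μ n (wordAt (shift r x) n 0) := by
  have hmeas : MeasurableSet {y : Config A d | wordAt y n 0 = wordAt (shift r x) n 0} :=
    measurable_wordAt n 0 (MeasurableSet.singleton _)
  rw [wordDist_eq, wordDist_eq, ← (hμ.measurePreserving r).measureReal_preimage
    hmeas.nullMeasurableSet]
  refine measureReal_mono fun y hy => ?_
  simp only [Set.mem_preimage, Set.mem_ofPred_eq, wordAt_shift] at hy ⊢
  funext i
  have hlt : ∀ j, r j + (i j : ℕ) < n + ∑ j, r j := fun j => by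
    have := le_sum_coord r j
    have := (i j).2
    omega
  have := congrFun hy fun j => ⟨r j + i j, hlt j⟩
  simpa [wordAt] using this

/-- The words of `μ^n`-probability at least `A^{-c n^d}`. -/
def likelyWords (μ : Measure (Config A d)) (c : ℝ) (n : ℕ) : Set (Word A d n) :=
  {w | (A : ℝ) ^ (-(c * (n : ℝ) ^ d)) ≤ wordDist μ n w}

lemma ncard_likelyWords_le (hA : 2 ≤ A) (μ : Measure (Config A d)) [IsProbabilityMeasure μ]
    (c : ℝ) (n : ℕ) : ((likelyWords μ c n).ncard : ℝ) ≤ (A : ℝ) ^ (c * (n : ℝ) ^ d) := by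
  have hA0 : (0 : ℝ) < A := by positivity
  have h1 : ∑ w, (likelyWords μ c n).indicator (fun _ => (A : ℝ) ^ (-(c * (n : ℝ) ^ d))) w ≤
      ∑ w, wordDist μ n w := by
    refine Finset.sum_le_sum fun w _ => ?_
    exact Set.indicator_le' (fun _ hw => hw) (fun w _ => wordDist_nonneg μ n w) w
  rw [sum_indicator_const, sum_wordDist, Real.rpow_neg hA0.le, ← div_eq_mul_inv,
    div_le_iff₀ (Real.rpow_pos_of_pos hA0 _), one_mul] at h1
  exact h1

lemma measurableSet_likely (μ : Measure (Config A d)) (c : ℝ) (n : ℕ) :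
    MeasurableSet {x | wordAt x n 0 ∈ likelyWords μ c n} :=
  measurable_wordAt n 0 (Set.toFinite (likelyWords μ c n)).measurableSet

lemma tendsto_natCast_pow_atTop (hd : 1 ≤ d) :
    Tendsto (fun n : ℕ => (n : ℝ) ^ d) atTop atTop :=
  (tendsto_pow_atTop (by omega)).comp tendsto_natCast_atTop_atTop

/-- The lower half of the Shannon–McMillan–Breiman theorem. -/
theorem ErgodicShift.eventually_notMem_likelyWords (hA : 2 ≤ A) (hd : 1 ≤ d)
    {μ : Measure (Config A d)} [IsProbabilityMeasure μ] (hμ : ErgodicShift μ) {h : ℝ}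
    (hrate : HasEntropyRate μ h) {c : ℝ} (hc0 : 0 ≤ c) (hc : c < h) :
    ∀ᵐ x ∂μ, ∀ᶠ n in atTop, wordAt x n 0 ∉ likelyWords μ c n := by
  have hA1 : (1 : ℝ) < A := by exact_mod_cast hA
  have hA0 : (0 : ℝ) < A := by positivity
  obtain ⟨c₁, hc₁, hc₁h⟩ := exists_between hc
  have hc₁0 : 0 < c₁ := hc0.trans_lt hc₁
  let L : ℝ → Set (Config A d) := fun a => {x | ∃ᶠ n in atTop, wordAt x n 0 ∈ likelyWords μ a n}
  have hLmeas : MeasurableSet (L c₁) :=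
    measurableSet_frequently_mem fun n => measurableSet_likely μ c₁ n
  have hLL : ∀ r : Site d, L c ⊆ shift r ⁻¹' L c₁ := by
    intro r x hx
    simp only [L, Set.mem_ofPred_eq, Set.mem_preimage] at hx ⊢
    set R := ∑ j, r j with hR
    have hη : 0 < 1 - c / c₁ := by
      have := (div_lt_one hc₁0).2 hc₁
      linarith
    have hev := (eventually_sub_pow_ge d R hη).and (eventually_ge_atTop R)
    refine (tendsto_sub_atTop_nat R).frequently ((hx.and_eventually hev).mono ?_)
    rintro N ⟨hN, hpow, hRN⟩
    obtain ⟨n, rfl⟩ : ∃ n, N = n + R := ⟨N - R, by omega⟩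
    rw [Nat.add_sub_cancel] at hpow ⊢
    refine le_trans ?_ (hN.trans (wordDist_le_of_shift hμ.1 n r x))
    refine Real.rpow_le_rpow_of_exponent_le hA1.le (neg_le_neg ?_)
    have := mul_le_mul_of_nonneg_left hpow hc₁0.le
    have e : c₁ * ((1 - (1 - c / c₁)) * ((n + R : ℕ) : ℝ) ^ d) = c * ((n + R : ℕ) : ℝ) ^ d := by
      field_simp
      ring
    linarith
  rcases hμ.eq_zero_or_eq_one_of_shift hLmeas hLL with h0 | h1
  · have : ∀ᵐ x ∂μ, x ∉ L c := measure_eq_zero_iff_ae_notMem.1 h0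
    filter_upwards [this] with x hx
    simpa only [L, Set.mem_ofPred_eq, not_frequently] using hx
  exfalso
  have hio : ∀ᵐ x ∂μ, ∃ᶠ n in atTop, x ∈ {x | wordAt x n 0 ∈ likelyWords μ c₁ n} :=
    (mem_ae_iff_prob_eq_one hLmeas).2 h1
  have hpack := packingProperty_zero hμ.1 (measurableSet_likely μ c₁) hio
  set δ := (h - c₁) / 8 with hδ
  have hδ0 : 0 < δ := by rw [hδ]; linarith
  obtain ⟨m, hm⟩ := ncard_packed_le (A := A) (d := d) hA hd hc₁0.le hδ0
  obtain ⟨M, hM⟩ := hpack δ hδ0 m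
  have hcount := hm _ (ncard_likelyWords_le hA μ c₁) M
  have hent : ∀ᶠ N : ℕ in atTop, entH A (wordDist μ N) / (N : ℝ) ^ d ≤
      c₁ + 4 * δ + 1 / (N : ℝ) ^ d := by
    filter_upwards [hM, eventually_ge_atTop 1] with N hN hN1
    have hNpos : (0 : ℝ) < (N : ℝ) ^ d := by
      have : (0 : ℝ) < N := by exact_mod_cast hN1
      positivity
    set T := (fun x : Config A d => wordAt x N 0) ''
        {x | ∃ P, IsPacking (fun n => {r | wordAt x n r ∈ likelyWords μ c₁ n}) m M N P ∧
          (1 - δ) * (N : ℝ) ^ d ≤ packVol P} with hT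
    have hB : ∑ w, (Tᶜ).indicator (wordDist μ N) w ≤ δ := by
      rw [sum_indicator_wordDist]
      refine ENNReal.toReal_le_of_le_ofReal hδ0.le ((measure_mono ?_).trans hN)
      intro x hx
      simp only [Set.mem_ofPred_eq, Set.mem_compl_iff] at hx ⊢
      rintro ⟨P, hP, hvol⟩
      refine hx ⟨x, ⟨P, ?_, by simpa using hvol⟩, rfl⟩
      convert hP using 4 with n r
      rw [wordAt_shift, zero_add]
    have hle := entH_le_of_concentrated hA (wordDist μ N) (wordDist_nonneg μ N)
      (sum_wordDist μ N) T (Real.one_le_rpow hA1.le (by positivity)) (hcount N)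
      (compl_compl T).subset hB
    rw [Real.logb_rpow hA0 hA1.ne'] at hle
    have hcard : Real.logb A (Fintype.card (Word A d N)) = (N : ℝ) ^ d := by
      simp only [Fintype.card_fun, Fintype.card_fin, Nat.cast_pow]
      rw [Real.logb_pow, Real.logb_self_eq_one hA1, mul_one, Nat.cast_pow]
    rw [hcard] at hle
    rw [div_le_iff₀ hNpos]
    calc _ ≤ _ := hle
      _ = _ := by field_simp; ring
  have hlim : Tendsto (fun N : ℕ => c₁ + 4 * δ + 1 / (N : ℝ) ^ d) atTop (𝓝 (c₁ + 4 * δ + 0)) :=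
    tendsto_const_nhds.add ((tendsto_natCast_pow_atTop hd).const_div_atTop 1)
  have := le_of_tendsto_of_tendsto hrate hlim hent
  rw [hδ] at this
  linarith

lemma kOf_pow_le (hd : 1 ≤ d) (n : ℕ) (hA : 2 ≤ A) (hn : 1 ≤ n) :
    (kOf A d n : ℝ) ^ d ≤ Real.logb A ((n : ℝ) ^ d) := by
  have hA1 : (1 : ℝ) < A := by exact_mod_cast hA
  have hn1 : (1 : ℝ) ≤ n := by exact_mod_cast hn
  have h0 : 0 ≤ Real.logb A ((n : ℝ) ^ d) := Real.logb_nonneg hA1 (one_le_pow₀ hn1)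
  calc (kOf A d n : ℝ) ^ d ≤ (Real.logb A ((n : ℝ) ^ d) ^ (1 / (d : ℝ))) ^ d := by
        gcongr
        exact Nat.floor_le (Real.rpow_nonneg h0 _)
    _ = _ := by rw [one_div, Real.rpow_inv_natCast_pow h0 (by omega)]

lemma pow_kOf_le (hA : 2 ≤ A) (hd : 1 ≤ d) {n : ℕ} (hn : 1 ≤ n) :
    A ^ (kOf A d n ^ d) ≤ n ^ d := by
  have hA1 : (1 : ℝ) < A := by exact_mod_cast hA
  have hn1 : (1 : ℝ) ≤ n := by exact_mod_cast hn
  have h := (Real.le_logb_iff_rpow_le hA1 (by positivity)).1 (kOf_pow_le hd n hA hn)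
  have : (A : ℝ) ^ (kOf A d n ^ d) ≤ (n : ℝ) ^ d := by
    rw [← Real.rpow_natCast]
    push_cast
    exact h
  exact_mod_cast this

lemma tendsto_kOf (hA : 2 ≤ A) (hd : 1 ≤ d) : Tendsto (fun n => kOf A d n) atTop atTop := by
  have hA1 : (1 : ℝ) < A := by exact_mod_cast hA
  refine tendsto_nat_floor_atTop.comp ((tendsto_rpow_atTop (by positivity)).comp
    ((Real.tendsto_logb_atTop hA1).comp (tendsto_natCast_pow_atTop hd)))

lemma tendsto_kOf_div (hA : 2 ≤ A) (hd : 1 ≤ d) :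
    Tendsto (fun n : ℕ => (kOf A d n : ℝ) / n) atTop (𝓝 0) := by
  have hA1 : (1 : ℝ) < A := by exact_mod_cast hA
  have hlog : Tendsto (fun n : ℕ => (d / Real.log A) * (Real.log n / n)) atTop (𝓝 0) := by
    rw [← mul_zero (d / Real.log A)]
    exact ((Real.isLittleO_log_id_atTop.tendsto_div_nhds_zero).comp
      tendsto_natCast_atTop_atTop).const_mul _
  refine squeeze_zero' (Eventually.of_forall fun n => by positivity) ?_ hlog
  filter_upwards [eventually_ge_atTop 1] with n hn
  have hn0 : (0 : ℝ) < n := by exact_mod_cast hn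
  have h1 : (kOf A d n : ℝ) ≤ (kOf A d n : ℝ) ^ d := by
    exact_mod_cast Nat.le_self_pow (by omega) _
  have h2 := h1.trans (kOf_pow_le hd n hA hn)
  rw [Real.logb_pow, Real.logb] at h2
  calc _ ≤ (d * (Real.log n / Real.log A)) / n := by gcongr
    _ = _ := by ring

/-- The part of the side `n` covered by blocks of side `k(n)` is asymptotically everything. -/
lemma tendsto_covered_div (hA : 2 ≤ A) (hd : 1 ≤ d) :
    Tendsto (fun n : ℕ => ((kOf A d n * (n / kOf A d n) : ℕ) : ℝ) / n) atTop (𝓝 1) := by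
  have h0 : Tendsto (fun n : ℕ => 1 - (kOf A d n : ℝ) / n) atTop (𝓝 (1 - 0)) :=
    tendsto_const_nhds.sub (tendsto_kOf_div hA hd)
  rw [sub_zero] at h0
  refine tendsto_of_tendsto_of_tendsto_of_le_of_le' h0 tendsto_const_nhds ?_ ?_
  all_goals
    filter_upwards [eventually_ge_atTop 1, (tendsto_kOf hA hd).eventually_ge_atTop 1] with n hn hk
    have hn0 : (0 : ℝ) < n := by exact_mod_cast hn
    have h1 := Nat.div_add_mod n (kOf A d n)
    have h2 := Nat.mod_lt n (show 0 < kOf A d n by omega)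
  · rw [one_sub_div hn0.ne']
    have : (n : ℝ) ≤ (kOf A d n * (n / kOf A d n) : ℕ) + kOf A d n := by
      exact_mod_cast (by omega)
    gcongr
    linarith
  · rw [div_le_one hn0]
    exact_mod_cast (by omega)

lemma tendsto_covered (hA : 2 ≤ A) (hd : 1 ≤ d) :
    Tendsto (fun n : ℕ => kOf A d n * (n / kOf A d n)) atTop atTop := by
  rw [← tendsto_natCast_atTop_iff (R := ℝ)]
  have h := (tendsto_natCast_atTop_atTop (R := ℝ)).atTop_mul_pos one_pos
    (tendsto_covered_div (A := A) hA hd)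
  refine h.congr' ?_
  filter_upwards [eventually_ge_atTop 1] with n hn
  have hn0 : (0 : ℝ) < n := by exact_mod_cast hn
  field_simp

/-- Few sequences have an empirical distribution of small entropy. -/
lemma ncard_low_entropy_le (hA : 2 ≤ A) {ι W : Type*} [Fintype ι] [Fintype W] [Nonempty ι]
    (E : ℝ) {s : ℝ} (hs0 : 0 < s) (hs1 : s < 1) :
    ({w : ι → W | entH A (fun v => ({r | w r = v}.ncard : ℝ) / Fintype.card ι) ≤ E}.ncard : ℝ) ≤
      (A : ℝ) ^ (Fintype.card ι * E) *
        (s⁻¹ ^ Fintype.card ι * (1 - s)⁻¹ ^ Fintype.card W) := by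
  classical
  have hA1 : (1 : ℝ) < A := by exact_mod_cast hA
  have hA0 : (0 : ℝ) < A := by positivity
  set K := Fintype.card ι with hK
  have hK0 : (0 : ℝ) < K := by exact_mod_cast Fintype.card_pos
  let cnt : (ι → W) → W → ℕ := fun w v => {r | w r = v}.ncard
  have hcnt : ∀ w v, cnt w v = (Finset.univ.filter fun r => w r = v).card := fun w v => by
    simp only [cnt]
    rw [Set.ncard_eq_toFinset_card']
    congr 1
    ext
    simp
  have hcntsum : ∀ w, ∑ v, cnt w v = K := fun w => by
    simp only [hcnt]
    rw [hK, ← Finset.card_univ]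
    exact (Finset.card_eq_sum_card_fiberwise fun _ _ => Finset.mem_coe.2 (Finset.mem_univ _)).symm
  have hprod : ∀ w : ι → W, ∏ r, ((cnt w (w r) : ℝ) / K) =
      (A : ℝ) ^ (-(K * entH A fun v => (cnt w v : ℝ) / K)) := by
    intro w
    have hpos : ∀ r, 0 < (cnt w (w r) : ℝ) / K := fun r => by
      have : 0 < cnt w (w r) := by
        rw [hcnt]
        exact Finset.card_pos.2 ⟨r, by simp⟩
      positivity
    have h1 : ∏ r, ((cnt w (w r) : ℝ) / K) =
        (A : ℝ) ^ ∑ r, Real.logb A ((cnt w (w r) : ℝ) / K) := by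
      rw [Real.rpow_sum_of_pos hA0]
      exact Finset.prod_congr rfl fun r _ => (Real.rpow_logb hA0 hA1.ne' (hpos r)).symm
    rw [h1]
    congr 1
    rw [← Finset.sum_fiberwise' Finset.univ w fun v => Real.logb A ((cnt w v : ℝ) / K), entH,
      mul_neg, neg_neg, Finset.mul_sum]
    refine Finset.sum_congr rfl fun v _ => ?_
    rw [Finset.sum_const, ← hcnt, nsmul_eq_mul]
    field_simp
  let T : Finset (W → ℕ) := (Fintype.piFinset fun _ => Finset.range (K + 1)).filter
    fun t => ∑ v, t v = K
  have hTmem : ∀ w, cnt w ∈ T := fun w => by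
    refine Finset.mem_filter.2 ⟨Fintype.mem_piFinset.2 fun v => Finset.mem_range.2 ?_, hcntsum w⟩
    have := Finset.single_le_sum (f := cnt w) (fun _ _ => Nat.zero_le _) (Finset.mem_univ v)
    rw [hcntsum] at this
    omega
  have hTcard : (T.card : ℝ) ≤ s⁻¹ ^ K * (1 - s)⁻¹ ^ Fintype.card W := by
    have h1 : (T.card : ℝ) * s ^ K ≤ (1 - s)⁻¹ ^ Fintype.card W := by
      calc (T.card : ℝ) * s ^ K = ∑ t ∈ T, ∏ v, s ^ t v := by
            rw [← nsmul_eq_mul, ← Finset.sum_const]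
            refine Finset.sum_congr rfl fun t ht => ?_
            rw [Finset.prod_pow_eq_pow_sum, (Finset.mem_filter.1 ht).2]
        _ ≤ ∑ t ∈ Fintype.piFinset fun _ : W => Finset.range (K + 1), ∏ v, s ^ t v :=
            Finset.sum_le_sum_of_subset_of_nonneg (Finset.filter_subset _ _)
              fun t _ _ => Finset.prod_nonneg fun v _ => by positivity
        _ = ∏ v : W, ∑ j ∈ Finset.range (K + 1), s ^ j :=
            (Finset.prod_univ_sum _ fun _ j => s ^ j).symm
        _ ≤ ∏ v : W, (1 - s)⁻¹ := by
            refine Finset.prod_le_prod (fun v _ => Finset.sum_nonneg fun j _ => by positivity)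
              fun v _ => ?_
            rw [← tsum_geometric_of_lt_one hs0.le hs1]
            exact (summable_geometric_of_lt_one hs0.le hs1).sum_le_tsum _
              fun j _ => by positivity
        _ = _ := by rw [Finset.prod_const, Finset.card_univ]
    rw [inv_pow, inv_mul_eq_div, le_div_iff₀ (by positivity)]
    exact h1
  set S := {w : ι → W | entH A (fun v => ({r | w r = v}.ncard : ℝ) / K) ≤ E} with hS
  have hpt : ∀ w, S.indicator (fun _ => (A : ℝ) ^ (-(K * E))) w ≤
      ∑ t ∈ T, ∏ r, ((t (w r) : ℝ) / K) := by
    refine fun w => Set.indicator_apply_le' (fun hw => ?_)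
      (fun _ => Finset.sum_nonneg fun t _ => Finset.prod_nonneg fun r _ => by positivity)
    refine le_trans ?_ (Finset.single_le_sum (f := fun t : W → ℕ => ∏ r, ((t (w r) : ℝ) / K))
      (fun t _ => Finset.prod_nonneg fun r _ => by positivity) (hTmem w))
    simp only [hprod]
    refine Real.rpow_le_rpow_of_exponent_le hA1.le (neg_le_neg ?_)
    have : entH A (fun v => (cnt w v : ℝ) / K) ≤ E := hw
    gcongr
  have hsum : (S.ncard : ℝ) * (A : ℝ) ^ (-(K * E)) ≤ T.card := by
    rw [← sum_indicator_const]
    refine (Finset.sum_le_sum fun w _ => hpt w).trans ?_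
    rw [Finset.sum_comm]
    have : ∀ t ∈ T, ∑ w : ι → W, ∏ r, ((t (w r) : ℝ) / K) = 1 := by
      intro t ht
      have h1 := Finset.prod_univ_sum (fun _ : ι => (Finset.univ : Finset W))
        fun _ v => (t v : ℝ) / K
      rw [Fintype.piFinset_univ] at h1
      rw [← h1]
      refine Finset.prod_eq_one fun r _ => ?_
      rw [← Finset.sum_div, ← Nat.cast_sum, (Finset.mem_filter.1 ht).2, div_self hK0.ne']
    rw [Finset.sum_congr rfl this]
    simp
  rw [Real.rpow_neg hA0.le, ← div_eq_mul_inv, div_le_iff₀ (Real.rpow_pos_of_pos hA0 _)] at hsum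
  calc (S.ncard : ℝ) ≤ T.card * (A : ℝ) ^ (K * E) := hsum
    _ ≤ (s⁻¹ ^ K * (1 - s)⁻¹ ^ Fintype.card W) * (A : ℝ) ^ (K * E) := by gcongr
    _ = _ := mul_comm _ _

/-- Few words have an empirical block distribution of small entropy. -/
lemma ncard_low_entropy_words_le (hA : 2 ≤ A) {k n : ℕ} (hk : 1 ≤ k) (hb : 1 ≤ n / k) (E : ℝ)
    {s : ℝ} (hs0 : 0 < s) (hs1 : s < 1) :
    (((fun x : Config A d => wordAt x (k * (n / k)) 0) ''
      {x | entH A (empDist x k n) ≤ E}).ncard : ℝ) ≤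
      (A : ℝ) ^ (((n / k : ℕ) : ℝ) ^ d * E) *
        (s⁻¹ ^ ((n / k) ^ d) * (1 - s)⁻¹ ^ (A ^ (k ^ d))) := by
  have : NeZero (n / k) := ⟨by omega⟩
  have hlow := ncard_low_entropy_le (A := A) hA (ι := Fin d → Fin (n / k)) (W := Word A d k) E
    hs0 hs1
  simp only [Fintype.card_fun, Fintype.card_fin, Nat.cast_pow] at hlow
  refine le_trans ?_ hlow
  have hlt : ∀ (r : Fin (n / k)) (i : Fin k), k * (r : ℕ) + i < k * (n / k) := fun r i => by
    calc k * (r : ℕ) + i < k * r + k := by omega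
      _ = k * (r + 1) := by ring
      _ ≤ _ := Nat.mul_le_mul_left _ r.2
  let φ : Word A d (k * (n / k)) → (Fin d → Fin (n / k)) → Word A d k :=
    fun w r i => w fun j => ⟨k * r j + i j, hlt (r j) (i j)⟩
  have hφ : ∀ (x : Config A d) r,
      φ (wordAt x (k * (n / k)) 0) r = wordAt x k fun j => k * (r j : ℕ) := by
    intro x r
    funext i
    simp [φ, wordAt]
  have hinj : Function.Injective φ := by
    intro w v h
    funext t
    have hdiv : ∀ j, (t j : ℕ) / k < n / k := fun j => Nat.div_lt_of_lt_mul (t j).2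
    have hmod : ∀ j, (t j : ℕ) % k < k := fun j => Nat.mod_lt _ (by omega)
    have := congrFun (congrFun h fun j => ⟨t j / k, hdiv j⟩) fun j => ⟨t j % k, hmod j⟩
    simpa [φ, Nat.div_add_mod] using this
  refine Nat.cast_le.2 (Set.ncard_le_ncard_of_injOn φ ?_ hinj.injOn (Set.toFinite _))
  rintro _ ⟨x, hx, rfl⟩
  simp only [Set.mem_ofPred_eq] at hx ⊢
  simp only [hφ]
  exact hx

/-- Asymptotic lower bound for the empirical entropy. -/
theorem ErgodicShift.eventually_le_entH (hA : 2 ≤ A) (hd : 1 ≤ d)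
    {μ : Measure (Config A d)} [IsProbabilityMeasure μ] (hμ : ErgodicShift μ) {h : ℝ}
    (hrate : HasEntropyRate μ h) {c : ℝ} (hc0 : 0 ≤ c) (hc : c < h) :
    ∀ᵐ x ∂μ, ∀ᶠ n in atTop,
      c * (kOf A d n : ℝ) ^ d < entH A (empDist x (kOf A d n) n) := by
  have hA1 : (1 : ℝ) < A := by exact_mod_cast hA
  have hA0 : (0 : ℝ) < A := by positivity
  obtain ⟨c', hc', hc'h⟩ := exists_between hc
  set γ := c' - c with hγ
  have hγ0 : 0 < γ := sub_pos.2 hc'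
  set a := γ / 4 / 2 ^ d with ha
  have ha0 : 0 < a := by positivity
  set s : ℝ := 1 - (A : ℝ) ^ (-a) with hs
  have hs1 : s < 1 := by
    have := Real.rpow_pos_of_pos hA0 (-a)
    rw [hs]; linarith
  have hs0 : 0 < s := sub_pos.2 (Real.rpow_lt_one_of_one_lt_of_neg hA1 (by linarith))
  have h1s : (1 - s)⁻¹ = (A : ℝ) ^ a := by
    rw [hs, sub_sub_cancel, Real.rpow_neg hA0.le, inv_inv]
  have hsinv : s⁻¹ = (A : ℝ) ^ Real.logb A s⁻¹ :=
    (Real.rpow_logb hA0 hA1.ne' (inv_pos.2 hs0)).symm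
  let bad : ℕ → Set (Config A d) := fun n =>
    {x | entH A (empDist x (kOf A d n) n) ≤ c * (kOf A d n : ℝ) ^ d ∧
      wordAt x (kOf A d n * (n / kOf A d n)) 0 ∉
        likelyWords μ c' (kOf A d n * (n / kOf A d n))}
  have hkd : ∀ᶠ n in atTop, Real.logb A s⁻¹ ≤ γ / 4 * (kOf A d n : ℝ) ^ d :=
    (((tendsto_natCast_pow_atTop hd).comp (tendsto_kOf hA hd)).const_mul_atTop
      (show 0 < γ / 4 by positivity)).eventually_ge_atTop _
  have hhalf : ∀ᶠ n : ℕ in atTop, 1 / 2 ≤ ((kOf A d n * (n / kOf A d n) : ℕ) : ℝ) / n :=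
    (tendsto_covered_div hA hd).eventually_const_le (by norm_num)
  have hbad : ∀ᶠ n : ℕ in atTop, μ (bad n) ≤ ENNReal.ofReal (((A : ℝ) ^ (-(γ / 4))) ^ n) := by
    filter_upwards [hkd, hhalf, eventually_ge_atTop 1,
      (tendsto_kOf hA hd).eventually_ge_atTop 1,
      (tendsto_covered hA hd).eventually_ge_atTop 1] with n hkd hhalf hn1 hk1 hN1
    set k := kOf A d n with hk
    set b := n / k with hb
    have hb1 : 1 ≤ b := Nat.one_le_iff_ne_zero.2 fun h => by simp [h] at hN1
    have hn0 : (0 : ℝ) < n := by exact_mod_cast hn1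
    have hn2 : (n : ℝ) ≤ 2 * (k * b : ℕ) := by
      rw [le_div_iff₀ hn0] at hhalf
      linarith
    set N : ℕ := k * b with hN
    set T := (fun x : Config A d => wordAt x N 0) ''
      {x | entH A (empDist x k n) ≤ c * (k : ℝ) ^ d} with hT
    have hTc : (T.ncard : ℝ) ≤ (A : ℝ) ^ ((b : ℝ) ^ d * (c * (k : ℝ) ^ d)) *
        (s⁻¹ ^ (b ^ d) * (1 - s)⁻¹ ^ (A ^ (k ^ d))) :=
      ncard_low_entropy_words_le hA hk1 hb1 (c * (k : ℝ) ^ d) hs0 hs1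
    have hNr : (N : ℝ) ^ d = (k : ℝ) ^ d * (b : ℝ) ^ d := by rw [hN, Nat.cast_mul, mul_pow]
    have hμbad : μ.real (bad n) ≤ T.ncard * (A : ℝ) ^ (-(c' * (N : ℝ) ^ d)) := by
      calc μ.real (bad n) ≤ μ.real {x | wordAt x N 0 ∈ T \ likelyWords μ c' N} :=
            measureReal_mono fun x hx => ⟨⟨x, hx.1, rfl⟩, hx.2⟩
        _ = ∑ w, (T \ likelyWords μ c' N).indicator (wordDist μ N) w :=
            (sum_indicator_wordDist μ N _).symm
        _ ≤ ∑ w, T.indicator (fun _ => (A : ℝ) ^ (-(c' * (N : ℝ) ^ d))) w := by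
            refine Finset.sum_le_sum fun w _ => Set.indicator_apply_le' (fun hw => ?_) fun _ =>
              Set.indicator_nonneg (fun _ _ => by positivity) w
            rw [Set.indicator_of_mem hw.1]
            exact (not_le.1 hw.2).le
        _ = _ := sum_indicator_const _ _
    refine ENNReal.le_ofReal_iff_toReal_le (measure_ne_top _ _) (by positivity) |>.2
      (hμbad.trans ?_)
    rw [h1s, hsinv, ← Real.rpow_natCast _ (b ^ d), ← Real.rpow_natCast _ (A ^ k ^ d), ← Real.rpow_mul hA0.le,
      ← Real.rpow_mul hA0.le, ← Real.rpow_add hA0, ← Real.rpow_add hA0] at hTc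
    calc _ ≤ _ := mul_le_mul_of_nonneg_right hTc (by positivity)
      _ = _ := (Real.rpow_add hA0 _ _).symm
      _ ≤ (A : ℝ) ^ (-(γ / 4) * (n : ℝ)) := by
          refine Real.rpow_le_rpow_of_exponent_le hA1.le ?_
          have e1 : Real.logb A s⁻¹ * ((b ^ d : ℕ) : ℝ) ≤ γ / 4 * (N : ℝ) ^ d := by
            rw [hNr, Nat.cast_pow, ← mul_assoc]
            gcongr
          have e2 : a * ((A ^ k ^ d : ℕ) : ℝ) ≤ γ / 4 * (N : ℝ) ^ d := by
            calc a * ((A ^ k ^ d : ℕ) : ℝ) ≤ a * ((n ^ d : ℕ) : ℝ) := by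
                  have := pow_kOf_le hA hd hn1
                  gcongr
              _ ≤ a * (2 * (N : ℝ)) ^ d := by
                  push_cast
                  gcongr
              _ = _ := by rw [ha, mul_pow]; field_simp
          have e3 : (N : ℝ) ≤ (N : ℝ) ^ d := by exact_mod_cast Nat.le_self_pow (by omega) N
          have e4 : (b : ℝ) ^ d * (c * (k : ℝ) ^ d) = c * (N : ℝ) ^ d := by rw [hNr]; ring
          rw [e4]
          have e5 := mul_le_mul_of_nonneg_left hn2 hγ0.le
          have e6 := mul_le_mul_of_nonneg_left e3 hγ0.le
          have e7 : γ * (N : ℝ) ^ d = c' * (N : ℝ) ^ d - c * (N : ℝ) ^ d := by rw [hγ]; ring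
          linarith
      _ = _ := by rw [Real.rpow_mul hA0.le, Real.rpow_natCast]
  obtain ⟨n₀, hn₀⟩ := eventually_atTop.1 hbad
  have hsum : ∑' n, μ (if n₀ ≤ n then bad n else ∅) ≠ ⊤ := by
    set ρ : ℝ := (A : ℝ) ^ (-(γ / 4)) with hρ
    have hρ0 : 0 ≤ ρ := by positivity
    have hρ1 : ρ < 1 := Real.rpow_lt_one_of_one_lt_of_neg hA1 (by linarith)
    have hs := (summable_geometric_of_lt_one hρ0 hρ1).tsum_ofReal_ne_top
    refine ne_top_of_le_ne_top hs (ENNReal.tsum_le_tsum fun n => ?_)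
    split_ifs with h
    · exact hn₀ n h
    · simp
  filter_upwards [ae_eventually_notMem hsum,
    hμ.eventually_notMem_likelyWords hA hd hrate (hc0.trans hc'.le) hc'h] with x hx hsmb
  filter_upwards [hx, eventually_ge_atTop n₀, (tendsto_covered hA hd).eventually hsmb]
    with n hn hn0 hn'
  rw [if_pos hn0] at hn
  exact not_le.1 fun hle => hn ⟨hle, hn'⟩

lemma empDist_nonneg (x : Config A d) (k n : ℕ) (w : Word A d k) : 0 ≤ empDist x k n w := by
  rw [empDist]
  positivity

lemma sum_empDist_mul (x : Config A d) (k n : ℕ) (G : Word A d k → ℝ) :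
    ∑ w, empDist x k n w * G w =
      (∑ r : Fin d → Fin (n / k), G (wordAt x k fun j => k * (r j : ℕ))) /
        ((n / k : ℕ) : ℝ) ^ d := by
  classical
  rw [← Finset.sum_fiberwise' Finset.univ
    (fun r : Fin d → Fin (n / k) => wordAt x k fun j => k * (r j : ℕ)) G, Finset.sum_div]
  refine Finset.sum_congr rfl fun w _ => ?_
  rw [empDist, Finset.sum_const, nsmul_eq_mul, Set.ncard_eq_toFinset_card', div_mul_eq_mul_div]
  congr 4
  ext
  simp

lemma sum_empDist (x : Config A d) {k n : ℕ} (hb : 1 ≤ n / k) : ∑ w, empDist x k n w = 1 := by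
  have h := sum_empDist_mul x k n fun _ => 1
  simp only [mul_one, Finset.sum_const, Finset.card_univ, Fintype.card_fun, Fintype.card_fin,
    nsmul_eq_mul, Nat.cast_pow] at h
  rw [h, div_self]
  have : (0 : ℝ) < (n / k : ℕ) := by exact_mod_cast hb
  positivity

lemma empDist_le_one (x : Config A d) {k n : ℕ} (hb : 1 ≤ n / k) (w : Word A d k) :
    empDist x k n w ≤ 1 := by
  rw [← sum_empDist x hb]
  exact Finset.single_le_sum (fun v _ => empDist_nonneg x k n v) (Finset.mem_univ w)

/-- Coding `k`-blocks by `m`-words placed on a grid with a given offset. -/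
lemma entH_empDist_le_offset (hA : 2 ≤ A) {m k n : ℕ} (hb : 1 ≤ n / k)
    {q : Word A d m → ℝ} (hq : ∀ w, 0 < q w) (hq1 : ∑ w, q w = 1) (x : Config A d)
    {K : ℕ} (hK : m * (K + 1) ≤ k) (c : Fin d → Fin m) :
    ((n / k : ℕ) : ℝ) ^ d * entH A (empDist x k n) ≤
      (∑ r : Fin d → Fin (n / k), ∑ s : Fin d → Fin K,
        -Real.logb A (q (wordAt x m fun j => k * (r j : ℕ) + (m * s j + c j)))) +
      ((n / k : ℕ) : ℝ) ^ d * ((k : ℝ) ^ d - (m * K : ℕ) ^ d) := by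
  classical
  have hA1 : (1 : ℝ) < A := by exact_mod_cast hA
  have hA0 : (0 : ℝ) < A := by positivity
  set b := n / k with hbdef
  have hb0 : (0 : ℝ) < (b : ℝ) ^ d := by
    have : (0 : ℝ) < b := by exact_mod_cast hb
    positivity
  have hlt : ∀ (s : Fin K) (c i : Fin m), m * (s : ℕ) + c + i < k := fun s c i => by
    have h1 : m * ((s : ℕ) + 1) ≤ m * K := Nat.mul_le_mul_left _ s.2
    have h2 := c.2
    have h3 := i.2
    rw [mul_add] at h1 hK
    omega
  let e : (s : Fin d → Fin K) → (Fin d → Fin m) → (Fin d → Fin k) :=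
    fun s i j => ⟨m * s j + c j + i j, hlt (s j) (c j) (i j)⟩
  have he : Function.Injective fun p : (Σ _ : Fin d → Fin K, Fin d → Fin m) => e p.1 p.2 := by
    rintro ⟨s, i⟩ ⟨s', i'⟩ h
    have h1 : ∀ j, m * (s j : ℕ) + (i j : ℕ) = m * (s' j : ℕ) + (i' j : ℕ) := fun j => by
      have := congrArg Fin.val (congrFun h j)
      simp only [e] at this
      omega
    have h2 : ∀ j, (s j : ℕ) = s' j ∧ (i j : ℕ) = i' j := fun j => by
      have hm : 0 < m := (Nat.zero_le _).trans_lt (i j).2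
      have hdiv := congrArg (· / m) (h1 j)
      have hmod := congrArg (· % m) (h1 j)
      simp only [Nat.mul_add_div hm, Nat.mul_add_mod, Nat.div_eq_of_lt (i j).2,
        Nat.div_eq_of_lt (i' j).2, Nat.mod_eq_of_lt (i j).2, Nat.mod_eq_of_lt (i' j).2] at hdiv hmod
      exact ⟨by omega, hmod⟩
    obtain rfl : s = s' := funext fun j => Fin.ext (h2 j).1
    obtain rfl : i = i' := funext fun j => Fin.ext (h2 j).2
    rfl
  have hsum := sum_prod_restrict (α := Fin A) e he fun _ v => q v
  simp only [hq1, Finset.prod_const_one, one_mul, Fintype.card_fun, Fintype.card_fin,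
    Finset.sum_const, Finset.card_univ, smul_eq_mul] at hsum
  have hle : K ^ d * m ^ d ≤ k ^ d := by
    rw [← mul_pow]
    refine Nat.pow_le_pow_left ?_ d
    rw [mul_add] at hK
    rw [mul_comm]
    omega
  set D := k ^ d - K ^ d * m ^ d with hD
  let Q : Word A d k → ℝ := fun w => (∏ s, q fun v => w (e s v)) * ((A : ℝ) ^ D)⁻¹
  have hQ0 : ∀ w, 0 < Q w := fun w =>
    mul_pos (Finset.prod_pos fun s _ => hq _) (by positivity)
  have hQ1 : ∑ w, Q w = 1 := by
    simp only [Q]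
    rw [← Finset.sum_mul, hsum, mul_inv_cancel₀ (by positivity)]
  have hlogQ : ∀ w, -Real.logb A (Q w) = ∑ s, -Real.logb A (q fun v => w (e s v)) + D := by
    intro w
    simp only [Q]
    rw [Real.logb_mul (Finset.prod_pos fun s _ => hq _).ne' (by positivity), Real.logb_inv,
      Real.logb_pow, Real.logb_self_eq_one hA1, Real.logb_prod _ _ fun s _ => (hq _).ne',
      Finset.sum_neg_distrib]
    ring
  have hG := entH_le_cross_entropy hA (empDist x k n) Q (empDist_nonneg x k n) (sum_empDist x hb)
    hQ0 hQ1.le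
  rw [sum_empDist_mul, le_div_iff₀ hb0] at hG
  have hDr : (D : ℝ) = (k : ℝ) ^ d - (m * K : ℕ) ^ d := by
    rw [hD, Nat.cast_sub hle]
    push_cast
    ring
  have hcard : ∑ _r : Fin d → Fin b, (D : ℝ) = (b : ℝ) ^ d * D := by simp
  simp only [hlogQ, Finset.sum_add_distrib] at hG
  rw [← hbdef, hcard, hDr, mul_comm] at hG
  refine hG.trans (le_of_eq ?_)
  congr 1
  refine Finset.sum_congr rfl fun r _ => Finset.sum_congr rfl fun s _ => ?_
  congr 3
  funext v
  simp only [wordAt, e]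
  congr 1
  funext j
  ring

/-- Averaging over all offsets. -/
lemma entH_empDist_le (hA : 2 ≤ A) {m k n : ℕ} (hb : 1 ≤ n / k)
    {q : Word A d m → ℝ} (hq : ∀ w, 0 < q w) (hq1 : ∑ w, q w = 1) (x : Config A d)
    {K : ℕ} (hK : m * (K + 1) ≤ k) :
    (m : ℝ) ^ d * (((n / k : ℕ) : ℝ) ^ d * entH A (empDist x k n)) ≤
      ergSum (fun y => -Real.logb A (q (wordAt y m 0))) n x +
      (m : ℝ) ^ d * (((n / k : ℕ) : ℝ) ^ d * ((k : ℝ) ^ d - (m * K : ℕ) ^ d)) := by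
  classical
  have hA1 : (1 : ℝ) < A := by exact_mod_cast hA
  have hsum := Finset.sum_le_sum fun (c : Fin d → Fin m) (_ : c ∈ Finset.univ) =>
    entH_empDist_le_offset hA hb hq hq1 x hK c
  simp only [Finset.sum_add_distrib, Finset.sum_const, Finset.card_univ, Fintype.card_fun,
    Fintype.card_fin, nsmul_eq_mul, Nat.cast_pow] at hsum
  refine hsum.trans (add_le_add_left ?_ _)
  let ψ : (Fin d → Fin m) × (Fin d → Fin (n / k)) × (Fin d → Fin K) → Site d :=
    fun p j => k * (p.2.1 j : ℕ) + (m * p.2.2 j + p.1 j)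
  have hlt : ∀ (p : (Fin d → Fin m) × (Fin d → Fin (n / k)) × (Fin d → Fin K)) j,
      m * (p.2.2 j : ℕ) + p.1 j < k := fun p j => by
    have h1 : m * ((p.2.2 j : ℕ) + 1) ≤ m * K := Nat.mul_le_mul_left _ (p.2.2 j).2
    have h2 := (p.1 j).2
    rw [mul_add] at h1 hK
    omega
  have hinj : Function.Injective ψ := by
    rintro p p' h
    have h0 : ∀ j, (p.2.1 j : ℕ) = p'.2.1 j ∧ (p.2.2 j : ℕ) = p'.2.2 j ∧
        (p.1 j : ℕ) = p'.1 j := fun j => by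
      have hm : 0 < m := (Nat.zero_le _).trans_lt (p.1 j).2
      have hk : 0 < k := (Nat.zero_le _).trans_lt (hlt p j)
      have h1 := congrFun h j
      simp only [ψ] at h1
      have hdiv := congrArg (· / k) h1
      have hmod := congrArg (· % k) h1
      simp only [Nat.mul_add_div hk, Nat.mul_add_mod, Nat.div_eq_of_lt (hlt p j),
        Nat.div_eq_of_lt (hlt p' j), Nat.mod_eq_of_lt (hlt p j), Nat.mod_eq_of_lt (hlt p' j)]
        at hdiv hmod
      have hdiv' := congrArg (· / m) hmod
      have hmod' := congrArg (· % m) hmod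
      simp only [Nat.mul_add_div hm, Nat.mul_add_mod, Nat.div_eq_of_lt (p.1 j).2,
        Nat.div_eq_of_lt (p'.1 j).2, Nat.mod_eq_of_lt (p.1 j).2, Nat.mod_eq_of_lt (p'.1 j).2]
        at hdiv' hmod'
      exact ⟨by omega, by omega, hmod'⟩
    refine Prod.ext (funext fun j => Fin.ext (h0 j).2.2)
      (Prod.ext (funext fun j => Fin.ext (h0 j).1) (funext fun j => Fin.ext (h0 j).2.1))
  have hmem : ∀ p, ψ p ∈ cube 0 n := fun p => mem_cube_zero.2 fun j => by
    calc ψ p j < k * (p.2.1 j : ℕ) + k := Nat.add_lt_add_left (hlt p j) _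
      _ = k * (p.2.1 j + 1) := by ring
      _ ≤ k * (n / k) := Nat.mul_le_mul_left _ (p.2.1 j).2
      _ ≤ n := Nat.mul_div_le n k
  have hg : ∀ w, 0 ≤ -Real.logb A (q w) := fun w => by
    have : q w ≤ 1 := hq1 ▸ Finset.single_le_sum (fun v _ => (hq v).le) (Finset.mem_univ w)
    have := Real.logb_nonpos hA1 (hq w).le this
    linarith
  have heq : ∀ t, -Real.logb A (q (wordAt (shift t x) m 0)) = -Real.logb A (q (wordAt x m t)) :=
    fun t => by rw [wordAt_shift, zero_add]
  simp only [ergSum, heq]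
  calc _ = ∑ p, -Real.logb A (q (wordAt x m (ψ p))) := by
        rw [Fintype.sum_prod_type]
        refine Finset.sum_congr rfl fun c _ => ?_
        rw [Fintype.sum_prod_type]
    _ = ∑ t ∈ Finset.univ.image ψ, -Real.logb A (q (wordAt x m t)) :=
        (Finset.sum_image (f := fun t => -Real.logb A (q (wordAt x m t))) hinj.injOn).symm
    _ ≤ _ := Finset.sum_le_sum_of_subset_of_nonneg
        (Finset.image_subset_iff.2 fun p _ => hmem p) fun _ _ _ => hg _

/-- A fully supported distribution coding `μ^m`-words at a cost of at most one extra symbol. -/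
lemma exists_coding (hA : 2 ≤ A) (μ : Measure (Config A d)) [IsProbabilityMeasure μ] (m : ℕ) :
    ∃ q : Word A d m → ℝ, (∀ w, 0 < q w) ∧ ∑ w, q w = 1 ∧
      ∫ x, -Real.logb A (q (wordAt x m 0)) ∂μ ≤ entH A (wordDist μ m) + 1 := by
  classical
  have hA1 : (1 : ℝ) < A := by exact_mod_cast hA
  have : NeZero A := ⟨by omega⟩
  set W := Fintype.card (Word A d m) with hW
  have hW0 : (0 : ℝ) < W := by exact_mod_cast Fintype.card_pos
  let q : Word A d m → ℝ := fun w => (wordDist μ m w + (W : ℝ)⁻¹) / 2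
  have hq : ∀ w, 0 < q w := fun w => by
    have := wordDist_nonneg μ m w
    simp only [q]
    positivity
  refine ⟨q, hq, ?_, ?_⟩
  · simp only [q]
    rw [← Finset.sum_div, Finset.sum_add_distrib, sum_wordDist, Finset.sum_const,
      Finset.card_univ, ← hW, nsmul_eq_mul, mul_inv_cancel₀ hW0.ne']
    norm_num
  have hint : ∫ x, -Real.logb A (q (wordAt x m 0)) ∂μ =
      ∑ w, wordDist μ m w * -Real.logb A (q w) := by
    have hm := measurable_wordAt (A := A) m (0 : Site d)
    have := Measure.isProbabilityMeasure_map (μ := μ) hm.aemeasurable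
    rw [← integral_map (f := fun w => -Real.logb A (q w)) hm.aemeasurable
      (measurable_of_finite _).aestronglyMeasurable, integral_fintype Integrable.of_finite]
    refine Finset.sum_congr rfl fun w _ => ?_
    rw [smul_eq_mul, map_measureReal_apply hm (MeasurableSet.singleton w)]
    rfl
  rw [hint]
  have hlog2 : Real.logb A 2 ≤ 1 := by
    rw [← Real.logb_self_eq_one hA1]
    exact Real.logb_le_logb_of_le hA1 two_pos (by exact_mod_cast hA)
  have hw : ∀ w, wordDist μ m w * -Real.logb A (q w) ≤
      -(wordDist μ m w * Real.logb A (wordDist μ m w)) + wordDist μ m w := by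
    intro w
    rcases (wordDist_nonneg μ m w).eq_or_lt with h0 | h0
    · simp [← h0]
    have h1 : Real.logb A (wordDist μ m w / 2) ≤ Real.logb A (q w) :=
      Real.logb_le_logb_of_le hA1 (by positivity) (by simp only [q]; gcongr; simp)
    rw [Real.logb_div h0.ne' two_ne_zero] at h1
    have h2 := mul_le_mul_of_nonneg_left (show -Real.logb A (q w) ≤
      -Real.logb A (wordDist μ m w) + 1 by linarith) h0.le
    linarith
  refine (Finset.sum_le_sum fun w _ => hw w).trans (le_of_eq ?_)
  rw [Finset.sum_add_distrib, sum_wordDist, Finset.sum_neg_distrib, entH]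

lemma tendsto_grid_div {m : ℕ} (hm : 0 < m) :
    Tendsto (fun k : ℕ => ((m * (k / m - 1) : ℕ) : ℝ) / k) atTop (𝓝 1) := by
  have h0 : Tendsto (fun k : ℕ => 1 - (2 * m : ℝ) / k) atTop (𝓝 (1 - 0)) :=
    tendsto_const_nhds.sub (tendsto_const_div_atTop_nhds_zero_nat _)
  rw [sub_zero] at h0
  refine tendsto_of_tendsto_of_tendsto_of_le_of_le' h0 tendsto_const_nhds ?_ ?_
  all_goals
    filter_upwards [eventually_ge_atTop m] with k hk
    have hk0 : (0 : ℝ) < k := by exact_mod_cast hm.trans_le hk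
    have h1 := Nat.div_add_mod k m
    have h2 := Nat.mod_lt k hm
    have h3 := Nat.div_pos hk hm
    obtain ⟨j, hj⟩ : ∃ j, k / m = j + 1 := ⟨k / m - 1, by omega⟩
    rw [hj, mul_add] at h1
    rw [hj, Nat.add_sub_cancel]
  · rw [one_sub_div hk0.ne']
    have : (k : ℝ) ≤ (m * j : ℕ) + 2 * m := by exact_mod_cast (by omega)
    gcongr
    linarith
  · rw [div_le_one hk0]
    exact_mod_cast (by omega)

/-- Asymptotic upper bound for the empirical entropy. -/
theorem ErgodicShift.eventually_entH_le (hA : 2 ≤ A) (hd : 1 ≤ d)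
    {μ : Measure (Config A d)} [IsProbabilityMeasure μ] (hμ : ErgodicShift μ) {h : ℝ}
    (hrate : HasEntropyRate μ h) {c : ℝ} (hc : h < c) :
    ∀ᵐ x ∂μ, ∀ᶠ n in atTop,
      entH A (empDist x (kOf A d n) n) < c * (kOf A d n : ℝ) ^ d := by
  have hA1 : (1 : ℝ) < A := by exact_mod_cast hA
  obtain ⟨c', hc', hc'c⟩ := exists_between hc
  have hlim : Tendsto (fun n : ℕ => entH A (wordDist μ n) / (n : ℝ) ^ d + 1 / (n : ℝ) ^ d) atTop
      (𝓝 (h + 0)) := hrate.add ((tendsto_natCast_pow_atTop hd).const_div_atTop 1)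
  rw [add_zero] at hlim
  obtain ⟨m, hm, hm1⟩ := ((hlim.eventually_lt_const hc').and (eventually_ge_atTop 1)).exists
  have hmd : (0 : ℝ) < (m : ℝ) ^ d := by
    have : (0 : ℝ) < m := by exact_mod_cast hm1
    positivity
  rw [← add_div, div_lt_iff₀ hmd] at hm
  obtain ⟨q, hq, hq1, hqint⟩ := exists_coding hA μ m
  let f : Config A d → ℝ := fun y => -Real.logb A (q (wordAt y m 0))
  have hg : Measurable fun w : Word A d m => -Real.logb A (q w) := measurable_of_finite _
  have hfm : Measurable f := hg.comp (measurable_wordAt m 0)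
  have hf0 : ∀ x, 0 ≤ f x := fun x => by
    have h1 : q (wordAt x m 0) ≤ 1 :=
      hq1 ▸ Finset.single_le_sum (fun v _ => (hq v).le) (Finset.mem_univ _)
    have := Real.logb_nonpos hA1 (hq (wordAt x m 0)).le h1
    simp only [f]
    linarith
  have hfi : Integrable f μ :=
    (Integrable.of_finite (μ := μ.map fun x => wordAt x m 0)
      (f := fun w => -Real.logb A (q w))).comp_measurable (measurable_wordAt m 0)
  have hratio : Tendsto (fun n : ℕ =>
      c' / (((kOf A d n * (n / kOf A d n) : ℕ) : ℝ) / n) ^ d +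
        (1 - (((m * (kOf A d n / m - 1) : ℕ) : ℝ) / kOf A d n) ^ d)) atTop (𝓝 c') := by
    have h1 := (tendsto_const_nhds (x := c')).div ((tendsto_covered_div (A := A) hA hd).pow d)
      (by simp)
    have h2 := (((tendsto_grid_div hm1).comp (tendsto_kOf (A := A) hA hd)).pow d).const_sub 1
    have h3 := h1.add h2
    simpa using h3
  filter_upwards [hμ.eventually_ergSum_le hfm hf0 hfi (hqint.trans_lt hm)] with x hx
  filter_upwards [hx, hratio.eventually_lt_const hc'c, eventually_ge_atTop 1,
    (tendsto_kOf hA hd).eventually_ge_atTop (max m 1),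
    (tendsto_covered hA hd).eventually_ge_atTop 1] with n hn hr hn1 hk hN
  set k := kOf A d n with hkdef
  have hb : 1 ≤ n / k := Nat.one_le_iff_ne_zero.2 fun h => by simp [h] at hN
  have hmk : m ≤ k := (le_max_left _ _).trans hk
  have hK : m * ((k / m - 1) + 1) ≤ k := by
    rw [Nat.sub_add_cancel (Nat.div_pos hmk hm1)]
    exact Nat.mul_div_le k m
  have hmain := entH_empDist_le hA hb hq hq1 x hK
  have hn0 : (0 : ℝ) < n := by exact_mod_cast hn1
  have hk0 : (0 : ℝ) < k := by exact_mod_cast (le_max_right _ _).trans hk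
  have hb0 : (0 : ℝ) < (n / k : ℕ) := by exact_mod_cast hb
  have hle : (m : ℝ) ^ d * (((n / k : ℕ) : ℝ) ^ d * entH A (empDist x k n)) ≤
      c' * (m : ℝ) ^ d * (n : ℝ) ^ d + (m : ℝ) ^ d *
        (((n / k : ℕ) : ℝ) ^ d * ((k : ℝ) ^ d - (m * (k / m - 1) : ℕ) ^ d)) := by
    linarith
  refine lt_of_le_of_lt ?_ (mul_lt_mul_of_pos_right hr (pow_pos hk0 d))
  rw [← mul_assoc] at hle
  refine le_of_mul_le_mul_left (hle.trans (le_of_eq ?_)) (mul_pos hmd (pow_pos hb0 d))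
  rw [Nat.cast_mul k]
  simp only [div_pow, mul_pow]
  field_simp

/-- The empirical per-site `k(n)`-block entropy converges to the entropy
rate, almost surely, where `k(n) = ⌊(log_A n^d)^{1/d}⌋`. -/
theorem empirical_entropy_convergence
    (A d : ℕ) (hA : 2 ≤ A) (hd : 1 ≤ d)
    (μ : Measure (Config A d)) [IsProbabilityMeasure μ] (hμ : ErgodicShift μ)
    (h : ℝ) (hrate : HasEntropyRate μ h) :
    ∀ᵐ x ∂μ,
      Tendsto (fun n : ℕ =>
          entH A (empDist x (kOf A d n) n) / ((kOf A d n : ℕ) : ℝ) ^ d)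
        atTop (𝓝 h) := by
  have hkpos : ∀ᶠ n in atTop, (0 : ℝ) < (kOf A d n : ℝ) ^ d := by
    filter_upwards [(tendsto_kOf hA hd).eventually_ge_atTop 1] with n hn
    have : (0 : ℝ) < kOf A d n := by exact_mod_cast hn
    positivity
  have hup : ∀ᵐ x ∂μ, ∀ j : ℕ, ∀ᶠ n in atTop,
      entH A (empDist x (kOf A d n) n) < (h + 1 / ((j : ℝ) + 1)) * (kOf A d n : ℝ) ^ d :=
    ae_all_iff.2 fun j => hμ.eventually_entH_le hA hd hrate
      (lt_add_of_pos_right h Nat.one_div_pos_of_nat)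
  have hlow : ∀ᵐ x ∂μ, ∀ j : ℕ, ∀ᶠ n in atTop,
      (h - 1 / ((j : ℝ) + 1)) * (kOf A d n : ℝ) ^ d ≤ entH A (empDist x (kOf A d n) n) := by
    refine ae_all_iff.2 fun j => ?_
    rcases le_or_gt 0 (h - 1 / ((j : ℝ) + 1)) with h0 | h0
    · filter_upwards [hμ.eventually_le_entH hA hd hrate h0
        (sub_lt_self h Nat.one_div_pos_of_nat)] with x hx
      exact hx.mono fun n hn => hn.le
    · refine Eventually.of_forall fun x => ?_
      filter_upwards [hkpos, (tendsto_covered (A := A) hA hd).eventually_ge_atTop 1] with n hk hN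
      have hb : 1 ≤ n / kOf A d n := Nat.one_le_iff_ne_zero.2 fun h => by simp [h] at hN
      exact (mul_nonpos_of_nonpos_of_nonneg h0.le hk.le).trans
        (entH_nonneg hA _ (empDist_nonneg x _ n) (empDist_le_one x hb))
  filter_upwards [hup, hlow] with x hxu hxl
  refine tendsto_order.2 ⟨fun a ha => ?_, fun a ha => ?_⟩
  · obtain ⟨j, hj⟩ := exists_nat_one_div_lt (sub_pos.2 ha)
    filter_upwards [hxl j, hkpos] with n hn hk
    rw [← le_div_iff₀ hk] at hn
    linarith
  · obtain ⟨j, hj⟩ := exists_nat_one_div_lt (sub_pos.2 ha)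
    filter_upwards [hxu j, hkpos] with n hn hk
    rw [← div_lt_iff₀ hk] at hn
    linarith

end SRU1408
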